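/- Let p_v = 2^{-𝒩_V(v)·(n+5)} for every vertex v ≠ s of 𝔅_n, and let π_0' be the twin policy of π_0. Then Dantzig(𝔇_n, π_0') performs at least 2^n − 1 improving switches before terminating. -/

import Mathlib

/-! ## The Markov decision process `𝔅_n` -/

/-- Vertices of the MDP `𝔅_n`: a transportation vertex `t`, a sink `s`, a dummy vertex `d`,
and vertices `a i`, `b i` for `i ∈ {1,…,n}`. -/
inductive BV : Type where
  | t : BV
  | s : BV
  | d : BV
  | a : ℕ → BV
  | b : ℕ → BV
deriving DecidableEq

/-- The vertex `a i` for `i ∈ {1,…,n+1}`, with the convention `a (n+1) = s`. -/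
def aN (n i : ℕ) : BV := if i = n + 1 then BV.s else BV.a i

/-- The vertex `b i` for `i ∈ {1,…,n+1}`, with the convention `b (n+1) = d`. -/
def bN (n i : ℕ) : BV := if i = n + 1 then BV.d else BV.b i

/-- The vertex set of `𝔅_n`. -/
def IsBVertex (n : ℕ) : BV → Prop
  | BV.t => True
  | BV.s => True
  | BV.d => True
  | BV.a i => 1 ≤ i ∧ i ≤ n
  | BV.b i => 1 ≤ i ∧ i ≤ n

/-- The edge relation of `𝔅_n`: travel, enter, skip, board, stay, leave edges,
the edge `(d,s)` and the self-loop `(s,s)`. -/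
def BEdge (n : ℕ) (u v : BV) : Prop :=
  (∃ i, 1 ≤ i ∧ i ≤ n ∧ u = BV.t ∧ v = BV.a i) ∨
  (∃ i, 1 ≤ i ∧ i ≤ n ∧ u = BV.a i ∧ v = BV.b i) ∨
  (∃ i, 1 ≤ i ∧ i ≤ n ∧ u = BV.a i ∧ v = aN n (i + 1)) ∨
  (∃ i, 1 ≤ i ∧ i ≤ n ∧ u = BV.a i ∧ v = BV.t) ∨
  (∃ i, 1 ≤ i ∧ i ≤ n ∧ u = BV.b i ∧ v = bN n (i + 1)) ∨
  (∃ i, 1 ≤ i ∧ i ≤ n ∧ u = BV.b i ∧ v = aN n (i + 1)) ∨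
  (u = BV.d ∧ v = BV.s) ∨ (u = BV.s ∧ v = BV.s)

/-- The reward function of `𝔅_n`: `r(enter i) = 2^i`, `r(stay i) = 3/4`,
`r(board i) = -2^i + 5/4`, and reward `0` on all other edges. -/
def rB (n : ℕ) (u v : BV) : ℚ :=
  match u, v with
  | BV.a i, BV.b j => if i = j then 2 ^ i else 0
  | BV.a i, BV.t => -(2 ^ i) + 5 / 4
  | BV.b i, BV.b j => if j = i + 1 then 3 / 4 else 0
  | BV.b i, BV.d => if i = n then 3 / 4 else 0
  | _, _ => 0

/-- A policy for `𝔅_n` chooses an outgoing edge at every vertex. -/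
def IsBPolicy (n : ℕ) (π : BV → BV) : Prop := ∀ u, IsBVertex n u → BEdge n u (π u)

/-- A policy is weak unichain if it reaches the sink `s` from every vertex. -/
def BWeakUnichain (n : ℕ) (π : BV → BV) : Prop :=
  ∀ u, IsBVertex n u → ∃ k, π^[k] u = BV.s

open Classical in
/-- The value of a vertex `v` w.r.t. a (weak unichain) policy `π`:
the sum of the rewards along the path that `π` takes from `v` to the sink `s`. -/
noncomputable def BVal (n : ℕ) (π : BV → BV) (v : BV) : ℚ :=
  if h : ∃ k, π^[k] v = BV.s then
    ∑ i ∈ Finset.range (Nat.find h), rB n (π^[i] v) (π^[i + 1] v)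
  else 0

/-- The reduced costs of the edge `(u,v)` w.r.t. the policy `π`. -/
noncomputable def zB (n : ℕ) (π : BV → BV) (u v : BV) : ℚ :=
  rB n u v + BVal n π v - BVal n π u

/-- The edge `(u,v)` is an improving switch for `π` if its reduced costs are positive. -/
def BImproving (n : ℕ) (π : BV → BV) (u v : BV) : Prop :=
  BEdge n u v ∧ 0 < zB n π u v

/-- The Bland numbering `𝒩_{𝔅_n}` of the edges of `𝔅_n`. -/
def NB (n : ℕ) (u v : BV) : ℕ :=
  match u, v with
  | BV.t, BV.a i => i
  | BV.a i, BV.b _ => n + 1 + 5 * (i - 1)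
  | BV.a i, BV.a _ => n + 2 + 5 * (i - 1)
  | BV.a i, BV.s => n + 2 + 5 * (i - 1)
  | BV.a i, BV.t => n + 3 + 5 * (i - 1)
  | BV.b i, BV.b _ => n + 4 + 5 * (i - 1)
  | BV.b i, BV.d => n + 4 + 5 * (i - 1)
  | BV.b i, BV.a _ => n + 5 + 5 * (i - 1)
  | BV.b i, BV.s => n + 5 + 5 * (i - 1)
  | BV.d, BV.s => 6 * n + 1
  | BV.s, BV.s => 6 * n + 2
  | _, _ => 0

/-- One step of Bland's policy iteration with edge numbering `N`:
apply the improving switch with the smallest number. -/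
def IsBlandStep (n : ℕ) (N : BV → BV → ℕ) (π π' : BV → BV) : Prop :=
  ∃ u v, BImproving n π u v ∧ (∀ u' v', BImproving n π u' v' → N u v ≤ N u' v') ∧
    π' = Function.update π u v

/-- `BlandReaches n N π ψ` says that Bland's policy iteration started at `π` visits `ψ`. -/
def BlandReaches (n : ℕ) (N : BV → BV → ℕ) : (BV → BV) → (BV → BV) → Prop :=
  Relation.ReflTransGen (IsBlandStep n N)

/-- The canonical policy `π_0` for `0`: `travel 1`, `skip i` and `leave i` are active. -/
def pi0 (n : ℕ) : BV → BV := fun u =>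
  match u with
  | BV.t => BV.a 1
  | BV.a i => aN n (i + 1)
  | BV.b i => aN n (i + 1)
  | BV.d => BV.s
  | BV.s => BV.s

/-- The optimal policy `π_*`: `travel 1`, `enter i` for all `i`, `leave j` for `j < n`,
and `stay n` are active. -/
def piStar (n : ℕ) : BV → BV := fun u =>
  match u with
  | BV.t => BV.a 1
  | BV.a i => BV.b i
  | BV.b i => if i = n then BV.d else BV.a (i + 1)
  | BV.d => BV.s
  | BV.s => BV.s

/-! ## Bits and canonical policies -/

/-- The least significant set bit `ℓ_1(x)` (1-based). -/
noncomputable def lsb (x : ℕ) : ℕ := sInf {i | 1 ≤ i ∧ Nat.testBit x (i - 1)}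

/-- The most significant set bit `m(x)` (1-based). -/
noncomputable def msb1 (x : ℕ) : ℕ := sSup {i | 1 ≤ i ∧ Nat.testBit x (i - 1)}

/-- The least unset bit `ℓ_0(x)` (1-based). -/
noncomputable def lzero (x : ℕ) : ℕ := sInf {i | 1 ≤ i ∧ ¬ Nat.testBit x (i - 1)}

/-- `L_i(x) = max { j ≤ i-2 | x_j = 1 or j = 1 }` (1-based bits). -/
noncomputable def Lfun (i x : ℕ) : ℕ :=
  sSup {j | 1 ≤ j ∧ j ≤ i - 2 ∧ (Nat.testBit x (j - 1) ∨ j = 1)}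

/-- `IsCanonical n x π` says that `π` is the canonical policy `π_x` for `x`. -/
noncomputable def IsCanonical (n x : ℕ) (π : BV → BV) : Prop :=
  IsBPolicy n π ∧
  if x = 0 then
    π BV.t = BV.a 1 ∧
      ∀ i, 1 ≤ i → i ≤ n → π (BV.a i) = aN n (i + 1) ∧ π (BV.b i) = aN n (i + 1)
  else
    π BV.t = BV.a (lsb x) ∧
    π (BV.b (msb1 x)) = aN n (msb1 x + 1) ∧
    (∀ i, msb1 x < i → i ≤ n → π (BV.a i) = aN n (i + 1) ∧ π (BV.b i) = aN n (i + 1)) ∧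
    ∀ i, 1 ≤ i → i ≤ n → Nat.testBit x (i - 1) →
      π (BV.a i) = BV.b i ∧
      (i = 2 → π (BV.b 1) = BV.a 2 ∧ (¬ Nat.testBit x 0 → π (BV.a 1) = BV.a 2)) ∧
      (3 ≤ i → Nat.testBit x (i - 2) → π (BV.b (i - 1)) = BV.a i) ∧
      (3 ≤ i → ¬ Nat.testBit x (i - 2) →
        π (BV.b (i - 1)) = BV.b i ∧ π (BV.a (i - 1)) = BV.a i ∧
        π (BV.b (i - 2)) = BV.a (i - 1) ∧
        (Lfun i x < i - 2 →
          ∀ j, Lfun i x + 1 ≤ j → j ≤ i - 2 →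
            π (BV.a j) = BV.t ∧ π (BV.b (j - 1)) = BV.b j) ∧
        (Lfun i x = 1 → ¬ Nat.testBit x 0 → π (BV.a 1) = BV.t))

/-- Activating a list of edges in a policy, from left to right. -/
def activateList (π : BV → BV) (L : List (BV × BV)) : BV → BV :=
  L.foldl (fun σ e => Function.update σ e.1 e.2) π

/-- The canonical phases w.r.t. an odd number `x` (with `ℓ := ℓ_0(x)`), as a list of edges
to be activated in order. -/
noncomputable def phaseList (n x : ℕ) : List (BV × BV) :=
  let ℓ := lzero x
  (if Nat.testBit x ℓ then [(BV.b ℓ, aN n (ℓ + 1))] else []) ++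
  (if Nat.testBit x ℓ ∨ msb1 x < ℓ then [(BV.b (ℓ - 1), BV.b ℓ)] else []) ++
  [(BV.a ℓ, BV.b ℓ), (BV.t, BV.a ℓ)] ++
  ((List.range (ℓ - 2)).map fun j => (BV.a (j + 1), BV.t)) ++
  [(BV.a (ℓ - 1), BV.a ℓ)] ++
  (((List.range (ℓ - 3)).reverse).map fun j => (BV.b (j + 1), BV.b (j + 2))) ++
  (if ℓ = 2 then [(BV.b 1, BV.a 2)] else [])

/-! ## The Markov decision process `𝔇_n` -/

/-- Vertices of `𝔇_n`: the original vertices (`base`), and for every edge `(v,w)` of `𝔅_n`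
other than the self-loop, the gadget vertices `x v w`, `y v w`, `z v w`. -/
inductive DV : Type where
  | base : BV → DV
  | x : BV → BV → DV
  | y : BV → BV → DV
  | z : BV → BV → DV
deriving DecidableEq

/-- The edges of `𝔅_n` that get replaced by gadgets (all edges except the self-loop `(s,s)`). -/
def DEdgePair (n : ℕ) (v w : BV) : Prop := BEdge n v w ∧ v ≠ BV.s

/-- The vertex set of `𝔇_n`. -/
def IsDVertex (n : ℕ) : DV → Prop
  | DV.base v => IsBVertex n v
  | DV.x v w => DEdgePair n v w
  | DV.y v w => DEdgePair n v w
  | DV.z v w => DEdgePair n v w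

/-- The agent vertices of `𝔇_n` (all vertices except the randomization vertices `y v w`). -/
def IsDAgent (n : ℕ) : DV → Prop
  | DV.base v => IsBVertex n v
  | DV.x v w => DEdgePair n v w
  | DV.y _ _ => False
  | DV.z v w => DEdgePair n v w

/-- The agent edges of `𝔇_n`. -/
def DEdge (n : ℕ) (u u' : DV) : Prop :=
  (∃ v w, DEdgePair n v w ∧
    ((u = DV.base v ∧ u' = DV.x v w) ∨ (u = DV.x v w ∧ u' = DV.base v) ∨
     (u = DV.x v w ∧ u' = DV.y v w) ∨ (u = DV.z v w ∧ u' = DV.base w))) ∨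
  (u = DV.base BV.s ∧ u' = DV.base BV.s)

/-- The reward function of `𝔇_n`: the edge `(z v w, w)` carries the reward of the original
edge `(v,w)`; all other agent edges have reward `0`. -/
def rD (n : ℕ) (u u' : DV) : ℚ :=
  match u, u' with
  | DV.z v w, DV.base w' => if w' = w then rB n v w else 0
  | _, _ => 0

/-- A policy for `𝔇_n` chooses an outgoing agent edge at every agent vertex. -/
def IsDPolicy (n : ℕ) (π : DV → DV) : Prop := ∀ u, IsDAgent n u → DEdge n u (π u)

/-- `IsDVal n p π V` says that `V` satisfies the Bellman equations characterizing the value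
function of the policy `π` for `𝔇_n` with probabilities `p`, with `V s = 0`. -/
def IsDVal (n : ℕ) (p : BV → ℚ) (π : DV → DV) (V : DV → ℚ) : Prop :=
  V (DV.base BV.s) = 0 ∧
  (∀ u, IsDAgent n u → V u = rD n u (π u) + V (π u)) ∧
  (∀ v w, DEdgePair n v w →
    V (DV.y v w) = p v * V (DV.z v w) + (1 - p v) * V (DV.base v))

open Classical in
/-- The value function of a (weak unichain) policy `π` for `𝔇_n`: the unique solution of the
Bellman equations (normalized to `0` outside the vertex set). -/
noncomputable def DVal (n : ℕ) (p : BV → ℚ) (π : DV → DV) : DV → ℚ :=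
  if h : ∃! V : DV → ℚ, IsDVal n p π V ∧ ∀ u, ¬ IsDVertex n u → V u = 0 then
    h.exists.choose
  else fun _ => 0

/-- The reduced costs of an agent edge `(u,u')` of `𝔇_n` w.r.t. the policy `π`. -/
noncomputable def zD (n : ℕ) (p : BV → ℚ) (π : DV → DV) (u u' : DV) : ℚ :=
  rD n u u' + DVal n p π u' - DVal n p π u

/-- An agent edge of `𝔇_n` is an improving switch if its reduced costs are positive. -/
def DImproving (n : ℕ) (p : BV → ℚ) (π : DV → DV) (u u' : DV) : Prop :=
  DEdge n u u' ∧ 0 < zD n p π u u'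

/-- One (agent or positive-probability randomization) step of the process `𝔇_n` under `π`. -/
def DStep (n : ℕ) (p : BV → ℚ) (π : DV → DV) (u u' : DV) : Prop :=
  (IsDAgent n u ∧ u' = π u) ∨
  (∃ v w, DEdgePair n v w ∧ u = DV.y v w ∧
    ((u' = DV.z v w ∧ 0 < p v) ∨ (u' = DV.base v ∧ 0 < 1 - p v)))

/-- A policy for `𝔇_n` is weak unichain if it reaches `s` with probability one from every
vertex, i.e. `s` is reachable via active/positive-probability steps from every vertex. -/
def DWeakUnichain (n : ℕ) (p : BV → ℚ) (π : DV → DV) : Prop :=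
  ∀ u, IsDVertex n u → Relation.ReflTransGen (DStep n p π) u (DV.base BV.s)

/-- The twin policy of a policy `π` for `𝔅_n`: every vertex `v ≠ s` is `π v`-oriented. -/
def twin (π : BV → BV) : DV → DV := fun u =>
  match u with
  | DV.base v => if v = BV.s then DV.base BV.s else DV.x v (π v)
  | DV.x v w => if w = π v then DV.y v w else DV.base v
  | DV.y v w => DV.y v w
  | DV.z _ w => DV.base w

/-- The vertex numbering `𝒩_V` of `𝔅_n`: the order `(t, a 1, b 1, a 2, b 2, …, a n, b n, d, s)`. -/
def NV (n : ℕ) : BV → ℕ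
  | BV.t => 1
  | BV.a i => 2 * i
  | BV.b i => 2 * i + 1
  | BV.d => 2 * n + 2
  | BV.s => 2 * n + 3

/-- The specific probabilities `p_v = 2^{-𝒩_V(v)·(n+5)}`. -/
noncomputable def pSpec (n : ℕ) (v : BV) : ℚ := (2 : ℚ) ^ (-((NV n v * (n + 5) : ℕ) : ℤ))

/-- The set `B(v)` of agent edges of `𝔇_n` belonging to the vertex `v`. -/
def Belongs (n : ℕ) (v : BV) (e : DV × DV) : Prop :=
  ∃ w, DEdgePair n v w ∧
    (e = (DV.x v w, DV.y v w) ∨ e = (DV.base v, DV.x v w) ∨ e = (DV.x v w, DV.base v))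

/-- Applying the improving switch `e` to the policy `π` yields `π'`. -/
def DApply (n : ℕ) (p : BV → ℚ) (π : DV → DV) (e : DV × DV) (π' : DV → DV) : Prop :=
  DImproving n p π e.1 e.2 ∧ π' = Function.update π e.1 e.2

/-- One step of Bland's policy iteration on `𝔇_n` with edge numbering `N`. -/
def IsBlandStepD (n : ℕ) (p : BV → ℚ) (N : DV → DV → ℕ) (π π' : DV → DV) : Prop :=
  ∃ u u', DImproving n p π u u' ∧ (∀ a b, DImproving n p π a b → N u u' ≤ N a b) ∧
    π' = Function.update π u u'

/-- One step of Dantzig's policy iteration on `𝔇_n`: apply an improving switch of maximal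
reduced costs. -/
def DantzigStep (n : ℕ) (p : BV → ℚ) (π π' : DV → DV) : Prop :=
  ∃ u u', DImproving n p π u u' ∧
    (∀ a b, DImproving n p π a b → zD n p π a b ≤ zD n p π u u') ∧
    π' = Function.update π u u'

/-- The finite set of vertices of `𝔅_n`, as a `Finset`. -/
noncomputable def BVSet (n : ℕ) : Finset BV :=
  {BV.t, BV.d, BV.s} ∪ (Finset.Icc 1 n).image BV.a ∪ (Finset.Icc 1 n).image BV.b

/-- The finite set of agent vertices of `𝔇_n`, as a `Finset`. -/
noncomputable def DAgentSet (n : ℕ) : Finset DV := by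
  classical
  exact ((BVSet n).image DV.base) ∪
    (((BVSet n ×ˢ BVSet n).filter fun e => DEdgePair n e.1 e.2).image fun e => DV.x e.1 e.2) ∪
    (((BVSet n ×ˢ BVSet n).filter fun e => DEdgePair n e.1 e.2).image fun e => DV.z e.1 e.2)

/-- The objective of the Largest Increase rule: the sum of the values of all agent vertices. -/
noncomputable def LIobj (n : ℕ) (p : BV → ℚ) (π : DV → DV) : ℚ :=
  ∑ u ∈ DAgentSet n, DVal n p π u

/-- One step of the Largest Increase policy iteration on `𝔇_n`: apply an improving switch
maximizing the sum of all agent vertex values of the resulting policy. -/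
def LIStep (n : ℕ) (p : BV → ℚ) (π π' : DV → DV) : Prop :=
  ∃ u u', DImproving n p π u u' ∧
    (∀ a b, DImproving n p π a b →
      LIobj n p (Function.update π a b) ≤ LIobj n p (Function.update π u u')) ∧
    π' = Function.update π u u'

/-- `N` is a Bland numbering `𝒩_{𝔇_n}` for `𝔇_n`: it is injective on agent edges, the edges
`(x v w, v)` all come first, within each gadget `(x v w, y v w)` precedes `(v, x v w)`,
the gadget blocks are ordered according to `𝒩_{𝔅_n}`, and the self-loop comes last. -/
def IsDBlandNumbering (n : ℕ) (N : DV → DV → ℕ) : Prop :=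
  (∀ u₁ u₂ u₁' u₂', DEdge n u₁ u₂ → DEdge n u₁' u₂' → N u₁ u₂ = N u₁' u₂' →
    u₁ = u₁' ∧ u₂ = u₂') ∧
  (∀ v w v' w', DEdgePair n v w → DEdgePair n v' w' →
    N (DV.x v w) (DV.base v) < N (DV.x v' w') (DV.y v' w')) ∧
  (∀ v w, DEdgePair n v w → N (DV.x v w) (DV.y v w) < N (DV.base v) (DV.x v w)) ∧
  (∀ v w v' w', DEdgePair n v w → DEdgePair n v' w' → NB n v w < NB n v' w' →
    N (DV.base v) (DV.x v w) < N (DV.x v' w') (DV.y v' w')) ∧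
  (∀ v w, DEdgePair n v w → N (DV.base v) (DV.x v w) < N (DV.base BV.s) (DV.base BV.s))

/-!
Read in `𝔅_n`, Dantzig's rule on `𝔇_n` performs *leading* switches: up to opening and closing
gadgets, each of its steps applies a best improving switch at the first vertex, in the order `𝒩_V`,
that has one. Indeed, activating an edge `(v, w)` in `𝔇_n` has reduced costs `p_v * zB n π v w`, and
the probabilities decay along `𝒩_V` faster than reduced costs in `𝔅_n` can vary.

From `π_0` on, every leading switch raises the maximum of the vertex values by at most `2`. This
maximum is `0` for `π_0` and at least `2 ^ (n + 1) - 5 / 4` once no improving switch is left.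
-/

/-! ## Structure of `𝔅_n` -/

section Structure

variable {n i : ℕ} {u v w : BV}

theorem aN_of_le (hi : i ≤ n) : aN n i = BV.a i := if_neg (by omega)

theorem bN_of_le (hi : i ≤ n) : bN n i = BV.b i := if_neg (by omega)

theorem aN_succ_self (n : ℕ) : aN n (n + 1) = BV.s := if_pos rfl

theorem bN_succ_self (n : ℕ) : bN n (n + 1) = BV.d := if_pos rfl

theorem aN_ne_bN (n i j : ℕ) : aN n i ≠ bN n j := by
  unfold aN bN; split_ifs <;> simp

theorem aN_ne_t (n i : ℕ) : aN n i ≠ BV.t := by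
  unfold aN; split_ifs <;> simp

theorem isBVertex_aN (h₁ : 1 ≤ i) (h₂ : i ≤ n + 1) : IsBVertex n (aN n i) := by
  unfold aN; split_ifs
  exacts [trivial, ⟨h₁, by omega⟩]

theorem isBVertex_bN (h₁ : 1 ≤ i) (h₂ : i ≤ n + 1) : IsBVertex n (bN n i) := by
  unfold bN; split_ifs
  exacts [trivial, ⟨h₁, by omega⟩]

theorem bEdge_t_iff : BEdge n BV.t w ↔ ∃ i, 1 ≤ i ∧ i ≤ n ∧ w = BV.a i := by
  simp [BEdge]

theorem bEdge_a_iff : BEdge n (BV.a i) w ↔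
    (1 ≤ i ∧ i ≤ n) ∧ (w = BV.b i ∨ w = aN n (i + 1) ∨ w = BV.t) := by
  simp only [BEdge, BV.a.injEq, reduceCtorEq]
  grind

theorem bEdge_b_iff : BEdge n (BV.b i) w ↔
    (1 ≤ i ∧ i ≤ n) ∧ (w = bN n (i + 1) ∨ w = aN n (i + 1)) := by
  simp only [BEdge, BV.b.injEq, reduceCtorEq]
  grind

theorem bEdge_d_iff : BEdge n BV.d w ↔ w = BV.s := by
  simp [BEdge]

theorem bEdge_s_iff : BEdge n BV.s w ↔ w = BV.s := by
  simp [BEdge]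

@[elab_as_elim]
theorem BEdge.elim {motive : ∀ v w, BEdge n v w → Prop} (h : BEdge n v w)
    (travel : ∀ i, 1 ≤ i → i ≤ n → ∀ h, motive BV.t (BV.a i) h)
    (enter : ∀ i, 1 ≤ i → i ≤ n → ∀ h, motive (BV.a i) (BV.b i) h)
    (skip : ∀ i, 1 ≤ i → i ≤ n → ∀ h, motive (BV.a i) (aN n (i + 1)) h)
    (board : ∀ i, 1 ≤ i → i ≤ n → ∀ h, motive (BV.a i) BV.t h)
    (stay : ∀ i, 1 ≤ i → i ≤ n → ∀ h, motive (BV.b i) (bN n (i + 1)) h)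
    (leave : ∀ i, 1 ≤ i → i ≤ n → ∀ h, motive (BV.b i) (aN n (i + 1)) h)
    (dummy : ∀ h, motive BV.d BV.s h) (sink : ∀ h, motive BV.s BV.s h) : motive v w h := by
  rcases id h with ⟨i, h₁, h₂, rfl, rfl⟩ | ⟨i, h₁, h₂, rfl, rfl⟩ | ⟨i, h₁, h₂, rfl, rfl⟩ |
    ⟨i, h₁, h₂, rfl, rfl⟩ | ⟨i, h₁, h₂, rfl, rfl⟩ | ⟨i, h₁, h₂, rfl, rfl⟩ | ⟨rfl, rfl⟩ | ⟨rfl, rfl⟩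
  exacts [travel i h₁ h₂ h, enter i h₁ h₂ h, skip i h₁ h₂ h, board i h₁ h₂ h, stay i h₁ h₂ h,
    leave i h₁ h₂ h, dummy h, sink h]

theorem BEdge.isBVertex_left (h : BEdge n v w) : IsBVertex n v := by
  cases h using BEdge.elim with
  | travel | dummy | sink => trivial
  | _ i h₁ h₂ => exact ⟨h₁, h₂⟩

theorem BEdge.isBVertex_right (h : BEdge n v w) : IsBVertex n w := by
  cases h using BEdge.elim with
  | travel i h₁ h₂ | enter i h₁ h₂ => exact ⟨h₁, h₂⟩
  | skip i _ h₂ | leave i _ h₂ => exact isBVertex_aN (by omega) (by omega)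
  | stay i _ h₂ => exact isBVertex_bN (by omega) (by omega)
  | _ => trivial

theorem BEdge.eq_of_to_a (h : BEdge n u (BV.a i)) :
    u = BV.t ∨ ∃ j, 1 ≤ j ∧ j + 1 = i ∧ (u = BV.a j ∨ u = BV.b j) := by
  unfold BEdge aN bN at h
  grind

theorem BEdge.eq_of_to_b (h : BEdge n u (BV.b i)) :
    u = BV.a i ∨ ∃ j, 1 ≤ j ∧ j + 1 = i ∧ u = BV.b j := by
  unfold BEdge aN bN at h
  grind

theorem two_mul_le_NV_aN (n i : ℕ) : 2 * i ≤ NV n (aN n i) := by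
  unfold aN; split_ifs <;> simp only [NV] <;> omega

theorem two_mul_le_NV_bN (n i : ℕ) : 2 * i ≤ NV n (bN n i) := by
  unfold bN; split_ifs <;> simp only [NV] <;> omega

theorem NV_le_NV_s (h : IsBVertex n v) : NV n v ≤ NV n BV.s := by
  cases v <;> simp only [NV, IsBVertex] at * <;> omega

theorem NV_injOn (hu : IsBVertex n u) (hv : IsBVertex n v) (h : NV n u = NV n v) : u = v := by
  cases u <;> cases v <;> simp only [NV, IsBVertex, BV.a.injEq, BV.b.injEq] at * <;> omega

theorem BEdge.NV_lt (h : BEdge n v w) (hv : v ≠ BV.s) (hw : w ≠ BV.t) : NV n v < NV n w := by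
  cases h using BEdge.elim with
  | skip i => exact lt_of_lt_of_le (by simp only [NV]; omega) (two_mul_le_NV_aN n (i + 1))
  | leave i => exact lt_of_lt_of_le (by simp only [NV]; omega) (two_mul_le_NV_aN n (i + 1))
  | stay i => exact lt_of_lt_of_le (by simp only [NV]; omega) (two_mul_le_NV_bN n (i + 1))
  | board | sink => contradiction
  | _ => simp only [NV]; omega

theorem rB_travel (n i : ℕ) : rB n BV.t (BV.a i) = 0 := rfl

theorem rB_enter (n i : ℕ) : rB n (BV.a i) (BV.b i) = 2 ^ i := by simp [rB]

theorem rB_board (n i : ℕ) : rB n (BV.a i) BV.t = -(2 ^ i) + 5 / 4 := rfl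

theorem rB_skip (n i : ℕ) : rB n (BV.a i) (aN n (i + 1)) = 0 := by
  unfold aN; split_ifs <;> rfl

theorem rB_stay (n i : ℕ) : rB n (BV.b i) (bN n (i + 1)) = 3 / 4 := by
  unfold bN; split_ifs <;> simp_all [rB]

theorem rB_leave (n i : ℕ) : rB n (BV.b i) (aN n (i + 1)) = 0 := by
  unfold aN; split_ifs <;> rfl

theorem rB_to_a (n : ℕ) (u : BV) (i : ℕ) : rB n u (BV.a i) = 0 := by
  cases u <;> rfl

theorem four_mul_rB_eq_intCast (n : ℕ) (v w : BV) : ∃ k : ℤ, 4 * rB n v w = k := by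
  unfold rB
  split
  · split_ifs
    exacts [⟨4 * 2 ^ _, by push_cast; rfl⟩, ⟨0, by norm_num⟩]
  · exact ⟨-(4 * 2 ^ _) + 5, by push_cast; ring⟩
  · split_ifs
    exacts [⟨3, by norm_num⟩, ⟨0, by norm_num⟩]
  · split_ifs
    exacts [⟨3, by norm_num⟩, ⟨0, by norm_num⟩]
  · exact ⟨0, by norm_num⟩

theorem two_le_two_pow (hi : 1 ≤ i) : (2 : ℚ) ≤ 2 ^ i :=
  le_self_pow₀ one_le_two (by omega)

/-- A potential on the vertices of `𝔅_n` whose differences bound the rewards of the edges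
(`rB_le_pot_sub_pot`), so that a path collects at most the difference of the potentials of its
endpoints. -/
def pot (n : ℕ) : BV → ℚ
  | BV.t => 3 / 2
  | BV.a i => 2 ^ i
  | BV.b i => 2 ^ (i + 1)
  | BV.d => 2 ^ (n + 1) + 3 / 4
  | BV.s => 2 ^ (n + 1) + 3 / 4

theorem pot_t (n : ℕ) : pot n BV.t = 3 / 2 := rfl

theorem pot_a (n i : ℕ) : pot n (BV.a i) = 2 ^ i := rfl

theorem pot_b (n i : ℕ) : pot n (BV.b i) = 2 ^ (i + 1) := rfl

theorem two_pow_le_pot_aN (n i : ℕ) : 2 ^ i ≤ pot n (aN n i) := by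
  unfold aN
  split_ifs with h
  · rw [h]; exact le_add_of_nonneg_right (by norm_num)
  · exact le_rfl

theorem two_pow_add_le_pot_bN (hi : 1 ≤ i) : 2 ^ i + 3 / 4 ≤ pot n (bN n i) := by
  unfold bN
  split_ifs with h
  · rw [h]; exact le_rfl
  · rw [pot_b, pow_succ]
    linarith [two_le_two_pow hi]

theorem le_pot (hv : IsBVertex n v) : 3 / 2 ≤ pot n v := by
  have hn : (2 : ℚ) ≤ 2 ^ (n + 1) := two_le_two_pow (by omega)
  cases v with
  | t => exact le_rfl
  | a i => exact le_trans (by norm_num) (two_le_two_pow hv.1)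
  | b i => exact le_trans (by norm_num) (two_le_two_pow (by omega : 1 ≤ i + 1))
  | d | s => simp only [pot]; linarith

theorem rB_le_pot_sub_pot (h : BEdge n v w) : rB n v w ≤ pot n w - pot n v := by
  cases h using BEdge.elim with
  | travel i h₁ => rw [rB_travel, pot_t, pot_a]; linarith [two_le_two_pow h₁]
  | enter i => rw [rB_enter, pot_a, pot_b, pow_succ]; linarith
  | skip i h₁ =>
    rw [rB_skip, pot_a]
    linarith [two_pow_le_pot_aN n (i + 1), two_le_two_pow h₁, pow_succ (2 : ℚ) i]
  | board i => rw [rB_board, pot_a, pot_t]; linarith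
  | stay i => rw [rB_stay, pot_b]; linarith [two_pow_add_le_pot_bN (n := n) (by omega : 1 ≤ i + 1)]
  | leave i => rw [rB_leave, pot_b]; linarith [two_pow_le_pot_aN n (i + 1)]
  | dummy | sink => simp [rB, pot]

end Structure

/-! ## Values of weak unichain policies -/

/-- A weak unichain policy for `𝔅_n`. -/
structure IsUnichainPolicy (n : ℕ) (π : BV → BV) : Prop where
  isBPolicy : IsBPolicy n π
  weakUnichain : BWeakUnichain n π

section Values

variable {n : ℕ} {π : BV → BV} {u v w : BV}

theorem bVal_s (n : ℕ) (π : BV → BV) : BVal n π BV.s = 0 := by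
  unfold BVal
  split_ifs with h
  · rw [(Nat.find_eq_zero h).2 rfl, Finset.sum_range_zero]
  · rfl

namespace IsUnichainPolicy

theorem bVal_eq (hπ : IsUnichainPolicy n π) (hv : IsBVertex n v) (hs : v ≠ BV.s) :
    BVal n π v = rB n v (π v) + BVal n π (π v) := by
  have h : ∃ k, π^[k] v = BV.s := hπ.weakUnichain v hv
  have h' : ∃ k, π^[k] (π v) = BV.s := hπ.weakUnichain _ (hπ.isBPolicy v hv).isBVertex_right
  unfold BVal
  rw [dif_pos h, dif_pos h', Nat.find_comp_succ h h' hs, Finset.sum_range_succ', add_comm]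
  rfl

@[elab_as_elim]
theorem induction (hπ : IsUnichainPolicy n π) {motive : ∀ v, IsBVertex n v → Prop}
    (sink : ∀ h, motive BV.s h)
    (step : ∀ v hv, v ≠ BV.s → motive (π v) (hπ.isBPolicy v hv).isBVertex_right → motive v hv)
    (v : BV) (hv : IsBVertex n v) : motive v hv := by
  obtain ⟨k, hk⟩ := hπ.weakUnichain v hv
  induction k generalizing v with
  | zero =>
    obtain rfl : v = BV.s := hk
    exact sink hv
  | succ k ih =>
    by_cases hs : v = BV.s
    · subst hs
      exact sink hv
    · exact step v hv hs (ih _ _ hk)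

theorem bVal_le_of_supersolution (hπ : IsUnichainPolicy n π) {U : BV → ℚ} (sink : 0 ≤ U BV.s)
    (step : ∀ v, IsBVertex n v → v ≠ BV.s → rB n v (π v) + U (π v) ≤ U v)
    (hv : IsBVertex n v) : BVal n π v ≤ U v := by
  induction v, hv using hπ.induction with
  | sink => exact (bVal_s n π).trans_le sink
  | step u hu hs ih => linarith [hπ.bVal_eq hu hs, step u hu hs]

theorem bVal_add_pot_le (hπ : IsUnichainPolicy n π) (hv : IsBVertex n v) :
    BVal n π v + pot n v ≤ pot n BV.s := by
  have := hπ.bVal_le_of_supersolution (U := fun u => pot n BV.s - pot n u) (sub_self _).ge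
    (fun u hu _ => by linarith [rB_le_pot_sub_pot (hπ.isBPolicy u hu)]) hv
  linarith

theorem four_mul_bVal_eq_intCast (hπ : IsUnichainPolicy n π) (hv : IsBVertex n v) :
    ∃ k : ℤ, 4 * BVal n π v = k := by
  induction v, hv using hπ.induction with
  | sink => exact ⟨0, by simp [bVal_s]⟩
  | step u hu hs ih =>
    obtain ⟨k, hk⟩ := ih
    obtain ⟨l, hl⟩ := four_mul_rB_eq_intCast n u (π u)
    exact ⟨l + k, by rw [hπ.bVal_eq hu hs]; push_cast; linarith⟩

theorem four_mul_zB_eq_intCast (hπ : IsUnichainPolicy n π) (h : BEdge n v w) :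
    ∃ k : ℤ, 4 * zB n π v w = k := by
  obtain ⟨j, hj⟩ := four_mul_rB_eq_intCast n v w
  obtain ⟨k, hk⟩ := hπ.four_mul_bVal_eq_intCast h.isBVertex_right
  obtain ⟨l, hl⟩ := hπ.four_mul_bVal_eq_intCast h.isBVertex_left
  exact ⟨j + k - l, by unfold zB; push_cast; linarith⟩

theorem zB_active (hπ : IsUnichainPolicy n π) (hv : IsBVertex n v) : zB n π v (π v) = 0 := by
  by_cases hs : v = BV.s
  · subst hs
    rw [bEdge_s_iff.1 (hπ.isBPolicy _ hv)]
    simp [zB, rB]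
  · rw [zB, ← hπ.bVal_eq hv hs, sub_self]

theorem active_ne (hπ : IsUnichainPolicy n π) (h : BImproving n π v w) : π v ≠ w := by
  rintro rfl
  exact h.2.ne' (hπ.zB_active h.1.isBVertex_left)

end IsUnichainPolicy

/-- Along a path that never visits `t` the quantity `W + pot` does not decrease, whereas travelling
from `t` to some `a i` strictly increases it. Hence a policy with subsolution `W` cannot cycle. -/
theorem reaches_s_or_reaches_t {W : BV → ℚ} (hπ : IsBPolicy n π)
    (hW : ∀ v, IsBVertex n v → W v ≤ rB n v (π v) + W (π v)) (hv : IsBVertex n v) :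
    (∃ k, π^[k] v = BV.s) ∨
      (∃ k, π^[k] v = BV.t) ∧ W v + pot n v ≤ W BV.t + pot n BV.t := by
  induction hN : NV n BV.s - NV n v using Nat.strong_induction_on generalizing v with
  | _ N ih =>
    have hedge := hπ v hv
    have hgain : W v + pot n v ≤ W (π v) + pot n (π v) := by
      linarith [hW v hv, rB_le_pot_sub_pot hedge]
    by_cases hs : v = BV.s
    · exact Or.inl ⟨0, hs⟩
    by_cases ht : π v = BV.t
    · rw [ht] at hgain
      exact Or.inr ⟨⟨1, ht⟩, hgain⟩
    have hlt := hedge.NV_lt hs ht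
    have hle := NV_le_NV_s hedge.isBVertex_right
    rcases ih _ (by omega) hedge.isBVertex_right rfl with ⟨k, hk⟩ | ⟨⟨k, hk⟩, hkt⟩
    · exact Or.inl ⟨k + 1, hk⟩
    · exact Or.inr ⟨⟨k + 1, hk⟩, hgain.trans hkt⟩

theorem bWeakUnichain_of_subsolution {W : BV → ℚ} (hπ : IsBPolicy n π)
    (hW : ∀ v, IsBVertex n v → W v ≤ rB n v (π v) + W (π v)) : BWeakUnichain n π := by
  have ht : ∃ k, π^[k] BV.t = BV.s := by
    obtain ⟨i, hi, hin, hti⟩ := bEdge_t_iff.1 (hπ BV.t trivial)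
    have hWt : W BV.t ≤ W (BV.a i) := by
      simpa [hti, rB_travel] using hW BV.t trivial
    rcases reaches_s_or_reaches_t hπ hW (v := BV.a i) ⟨hi, hin⟩ with ⟨k, hk⟩ | ⟨-, hgain⟩
    · exact ⟨k + 1, by rwa [Function.iterate_succ_apply, hti]⟩
    · rw [pot_a, pot_t] at hgain
      linarith [two_le_two_pow hi]
  intro v hv
  rcases reaches_s_or_reaches_t hπ hW hv with hk | ⟨⟨k, hk⟩, -⟩
  · exact hk
  · obtain ⟨l, hl⟩ := ht
    exact ⟨l + k, by rw [Function.iterate_add_apply, hk, hl]⟩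

end Values

/-! ## Improving switches in `𝔅_n` -/

section Update

variable {n : ℕ} {π : BV → BV} {u v w : BV}

theorem IsUnichainPolicy.update (hπ : IsUnichainPolicy n π) (h : BImproving n π v w) :
    IsUnichainPolicy n (Function.update π v w) := by
  have hpol : IsBPolicy n (Function.update π v w) := by
    intro u hu
    rcases eq_or_ne u v with rfl | huv
    · rw [Function.update_self]; exact h.1
    · rw [Function.update_of_ne huv]; exact hπ.isBPolicy u hu
  refine ⟨hpol, bWeakUnichain_of_subsolution (W := BVal n π) hpol fun u hu => ?_⟩
  rcases eq_or_ne u v with rfl | huv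
  · rw [Function.update_self]
    exact (sub_pos.1 h.2).le
  · rw [Function.update_of_ne huv]
    linarith [hπ.zB_active hu, show zB n π u (π u) = rB n u (π u) + BVal n π (π u) - BVal n π u
      from rfl]

theorem BImproving.ne_s (hπ : IsUnichainPolicy n π) (h : BImproving n π v w) : v ≠ BV.s := by
  rintro rfl
  exact hπ.active_ne h
    ((bEdge_s_iff.1 (hπ.isBPolicy BV.s trivial)).trans (bEdge_s_iff.1 h.1).symm)

theorem BImproving.ne_d (hπ : IsUnichainPolicy n π) (h : BImproving n π v w) : v ≠ BV.d := by
  rintro rfl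
  exact hπ.active_ne h
    ((bEdge_d_iff.1 (hπ.isBPolicy BV.d trivial)).trans (bEdge_d_iff.1 h.1).symm)

/-- The new policy visits `v` at most once, so exactly the vertices from which it visits `v` gain,
namely the reduced costs of the switch. -/
theorem bVal_update_eq_or (hπ : IsUnichainPolicy n π) (h : BImproving n π v w)
    (hu : IsBVertex n u) :
    BVal n (Function.update π v w) u = BVal n π u ∨
      BVal n (Function.update π v w) u = BVal n π u + zB n π v w := by
  have hπ' := hπ.update h
  set π' := Function.update π v w
  have hgain_v : BVal n π' v = BVal n π v + zB n π v w + (BVal n π' w - BVal n π w) := by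
    have := hπ'.bVal_eq h.1.isBVertex_left (h.ne_s hπ)
    rw [show π' v = w from Function.update_self ..] at this
    rw [zB]
    linarith
  have key (u : BV) (hu : IsBVertex n u) : BVal n π' u = BVal n π u ∨
      BVal n π' u - BVal n π u = BVal n π' v - BVal n π v := by
    induction u, hu using hπ'.induction with
    | sink => exact Or.inl (by rw [bVal_s, bVal_s])
    | step u hu hs ih =>
      rcases eq_or_ne u v with rfl | huv
      · exact Or.inr rfl
      · have heq := hπ.bVal_eq hu hs
        have heq' := hπ'.bVal_eq hu hs
        rw [show π' u = π u from Function.update_of_ne huv ..] at heq' ih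
        exact ih.imp (fun h => by linarith) (fun h => by linarith)
  have hw : BVal n π' w = BVal n π w :=
    (key w h.1.isBVertex_right).resolve_right fun hw => h.2.ne' (by linarith)
  exact (key u hu).imp_right fun h => by linarith

theorem bVal_le_bVal_update (hπ : IsUnichainPolicy n π) (h : BImproving n π v w)
    (hu : IsBVertex n u) : BVal n π u ≤ BVal n (Function.update π v w) u := by
  rcases bVal_update_eq_or hπ h hu with hu | hu <;> linarith [h.2]

theorem bVal_update_le_add (hπ : IsUnichainPolicy n π) (h : BImproving n π v w)
    (hu : IsBVertex n u) :
    BVal n (Function.update π v w) u ≤ BVal n π u + zB n π v w := by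
  rcases bVal_update_eq_or hπ h hu with hu | hu <;> linarith [h.2]

theorem le_bVal_update_self (hπ : IsUnichainPolicy n π) (h : BImproving n π v w) :
    rB n v w + BVal n π w ≤ BVal n (Function.update π v w) v := by
  have := (hπ.update h).bVal_eq h.1.isBVertex_left (h.ne_s hπ)
  rw [Function.update_self] at this
  linarith [bVal_le_bVal_update hπ h h.1.isBVertex_right]

/-- After a switch at `v`, a path starting behind `v` returns to `v` only through `t`. -/
theorem bVal_update_le_of_NV_lt (hπ : IsUnichainPolicy n π) (h : BImproving n π v w)
    (hu : IsBVertex n u) (hlt : NV n v < NV n u) :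
    BVal n (Function.update π v w) u ≤
      max (BVal n π u) (BVal n (Function.update π v w) BV.t + pot n BV.t - pot n u) := by
  have hπ' := hπ.update h
  induction u, hu using hπ'.induction with
  | sink => exact le_max_of_le_left (by rw [bVal_s, bVal_s])
  | step u hu hs ih =>
    have hpot := rB_le_pot_sub_pot (hπ.isBPolicy u hu)
    have heq := hπ.bVal_eq hu hs
    have heq' := hπ'.bVal_eq hu hs
    rw [Function.update_of_ne (ne_of_apply_ne (NV n) hlt.ne')] at heq' ih
    by_cases ht : π u = BV.t
    · rw [ht] at hpot heq'
      exact le_max_of_le_right (by linarith)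
    · rcases le_max_iff.1 (ih (hlt.trans ((hπ.isBPolicy u hu).NV_lt hs ht))) with hle | hle
      · exact le_max_of_le_left (by linarith)
      · exact le_max_of_le_right (by linarith)

/-- If the paths of `π` enter `S` only through `t` or along edges of nonpositive reward, then
switching at a vertex of `S ∪ {t}` lifts no vertex above its old value and the value offered by the
switch: a path that leads through `t` loses at least the difference of potentials. -/
theorem bVal_update_le_max (hπ : IsUnichainPolicy n π) (h : BImproving n π v w) {S : Set BV}
    (hv : v = BV.t ∨ v ∈ S) (hw : w ∉ S)
    (hS : ∀ u, IsBVertex n u → π u ∈ S → u = BV.t ∨ u ∈ S ∧ rB n u (π u) ≤ 0)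
    (hu : IsBVertex n u) :
    BVal n (Function.update π v w) u ≤ max (BVal n π u) (rB n v w + BVal n π w) := by
  classical
  set X := rB n v w + BVal n π w
  let c (u : BV) : ℚ := if u ∈ S then X else X + pot n BV.t - pot n u
  have c_mem {u} (hu : u ∈ S) : c u = X := if_pos hu
  have c_notMem {u} (hu : u ∉ S) : c u = X + pot n BV.t - pot n u := if_neg hu
  have c_bounds {u} (hu : IsBVertex n u) : X + pot n BV.t - pot n u ≤ c u ∧ c u ≤ X := by
    have := (pot_t n).trans_le (le_pot hu)
    by_cases huS : u ∈ S
    · rw [c_mem huS]; constructor <;> linarith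
    · rw [c_notMem huS]; constructor <;> linarith
  have c_t : c BV.t = X := by
    simp [c]
  have c_v : c v = X := by
    rcases hv with rfl | hv
    exacts [c_t, c_mem hv]
  have c_step {u} (hu : IsBVertex n u) : rB n u (π u) + c (π u) ≤ c u := by
    by_cases huS : π u ∈ S
    · rw [c_mem huS]
      rcases hS u hu huS with rfl | ⟨huS, hr⟩
      · rw [c_t]; exact (zero_add X).le
      · rw [c_mem huS]; linarith
    · rw [c_notMem huS]
      linarith [rB_le_pot_sub_pot (hπ.isBPolicy u hu), c_bounds hu]
  refine ((hπ.update h).bVal_le_of_supersolution (U := fun u => max (BVal n π u) (c u))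
    (le_max_of_le_left (bVal_s n π).ge) (fun u hu hs => ?_) hu).trans
    (max_le_max_left _ (c_bounds hu).2)
  rcases eq_or_ne u v with rfl | huv
  · rw [Function.update_self, c_notMem hw, ← max_add_add_left, c_v]
    refine max_le (le_max_right _ _) (le_max_of_le_right ?_)
    linarith [rB_le_pot_sub_pot h.1, (pot_t n).trans_le (le_pot hu)]
  · rw [Function.update_of_ne huv, ← max_add_add_left, ← hπ.bVal_eq hu hs]
    exact max_le_max_left _ (c_step hu)

end Update

/-! ## Leading switches -/

/-- All edges leaving `v` have nonpositive reduced costs w.r.t. `π`. -/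
def IsOptimalAt (n : ℕ) (π : BV → BV) (v : BV) : Prop :=
  ∀ w, BEdge n v w → zB n π v w ≤ 0

/-- The improving switches of `𝔅_n` that Dantzig's rule on `𝔇_n` gets to simulate: `v` is the first
vertex, in the order `𝒩_V`, with an improving switch, and `(v, w)` is a best switch at `v`. -/
structure IsLeadingSwitch (n : ℕ) (π : BV → BV) (v w : BV) : Prop where
  improving : BImproving n π v w
  optimal : ∀ u, NV n u < NV n v → IsOptimalAt n π u
  best : ∀ w', BEdge n v w' → zB n π v w' ≤ zB n π v w

/-- The policies of `𝔅_n` reachable from `pi0 n` by leading switches: nonnegative values, and for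
each level two constraints that exclude large gains. -/
structure IsTame (n : ℕ) (π : BV → BV) : Prop extends IsUnichainPolicy n π where
  nonneg : ∀ v, IsBVertex n v → 0 ≤ BVal n π v
  skip_stay : ∀ i, 1 ≤ i ∧ i ≤ n → π (BV.a i) = aN n (i + 1) → π (BV.b i) = bN n (i + 1) →
    BVal n π (BV.b i) ≤ BVal n π (BV.a i) - 2 ^ i ∨
      BVal n π (BV.b i) ≤ BVal n π BV.t - 2 ^ (i + 1) + 3 / 2
  board : ∀ i, 1 ≤ i ∧ i ≤ n → π (aN n (i + 1)) = BV.t →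
    π (BV.a i) = BV.t ∨ π (BV.a i) = BV.b i ∧ π (BV.b i) = bN n (i + 1)

section Levels

variable {n i : ℕ} {π : BV → BV} {v w : BV}

namespace IsUnichainPolicy

theorem bVal_enter (hπ : IsUnichainPolicy n π) (hi : 1 ≤ i ∧ i ≤ n) (h : π (BV.a i) = BV.b i) :
    BVal n π (BV.a i) = 2 ^ i + BVal n π (BV.b i) := by
  rw [hπ.bVal_eq (v := BV.a i) hi (by simp), h, rB_enter]

theorem bVal_skip (hπ : IsUnichainPolicy n π) (hi : 1 ≤ i ∧ i ≤ n)
    (h : π (BV.a i) = aN n (i + 1)) : BVal n π (BV.a i) = BVal n π (aN n (i + 1)) := by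
  rw [hπ.bVal_eq (v := BV.a i) hi (by simp), h, rB_skip, zero_add]

theorem bVal_board (hπ : IsUnichainPolicy n π) (hi : 1 ≤ i ∧ i ≤ n) (h : π (BV.a i) = BV.t) :
    BVal n π (BV.a i) = BVal n π BV.t - 2 ^ i + 5 / 4 := by
  rw [hπ.bVal_eq (v := BV.a i) hi (by simp), h, rB_board]
  ring

theorem bVal_stay (hπ : IsUnichainPolicy n π) (hi : 1 ≤ i ∧ i ≤ n)
    (h : π (BV.b i) = bN n (i + 1)) : BVal n π (BV.b i) = 3 / 4 + BVal n π (bN n (i + 1)) := by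
  rw [hπ.bVal_eq (v := BV.b i) hi (by simp), h, rB_stay]

theorem bVal_leave (hπ : IsUnichainPolicy n π) (hi : 1 ≤ i ∧ i ≤ n)
    (h : π (BV.b i) = aN n (i + 1)) : BVal n π (BV.b i) = BVal n π (aN n (i + 1)) := by
  rw [hπ.bVal_eq (v := BV.b i) hi (by simp), h, rB_leave, zero_add]

theorem bVal_d (hπ : IsUnichainPolicy n π) : BVal n π BV.d = 0 := by
  rw [hπ.bVal_eq (v := BV.d) trivial (by simp), bEdge_d_iff.1 (hπ.isBPolicy BV.d trivial), bVal_s]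
  simp [rB]

theorem cases_a (hπ : IsUnichainPolicy n π) (hi : 1 ≤ i ∧ i ≤ n) :
    π (BV.a i) = BV.b i ∨ π (BV.a i) = aN n (i + 1) ∨ π (BV.a i) = BV.t :=
  (bEdge_a_iff.1 (hπ.isBPolicy _ hi)).2

theorem cases_b (hπ : IsUnichainPolicy n π) (hi : 1 ≤ i ∧ i ≤ n) :
    π (BV.b i) = bN n (i + 1) ∨ π (BV.b i) = aN n (i + 1) :=
  (bEdge_b_iff.1 (hπ.isBPolicy _ hi)).2

end IsUnichainPolicy

namespace IsOptimalAt

theorem le (h : IsOptimalAt n π v) (hvw : BEdge n v w) : rB n v w + BVal n π w ≤ BVal n π v :=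
  sub_nonpos.1 (h w hvw)

theorem le_travel (h : IsOptimalAt n π BV.t) (hi : 1 ≤ i ∧ i ≤ n) :
    BVal n π (BV.a i) ≤ BVal n π BV.t := by
  simpa only [rB_travel, zero_add] using h.le (bEdge_t_iff.2 ⟨i, hi.1, hi.2, rfl⟩)

theorem le_enter (h : IsOptimalAt n π (BV.a i)) (hi : 1 ≤ i ∧ i ≤ n) :
    2 ^ i + BVal n π (BV.b i) ≤ BVal n π (BV.a i) := by
  simpa only [rB_enter] using h.le (bEdge_a_iff.2 ⟨hi, Or.inl rfl⟩)

theorem le_board (h : IsOptimalAt n π (BV.a i)) (hi : 1 ≤ i ∧ i ≤ n) :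
    BVal n π BV.t - 2 ^ i + 5 / 4 ≤ BVal n π (BV.a i) := by
  have := h.le (bEdge_a_iff.2 ⟨hi, Or.inr (Or.inr rfl)⟩)
  rw [rB_board] at this
  linarith

theorem le_stay (h : IsOptimalAt n π (BV.b i)) (hi : 1 ≤ i ∧ i ≤ n) :
    3 / 4 + BVal n π (bN n (i + 1)) ≤ BVal n π (BV.b i) := by
  simpa only [rB_stay] using h.le (bEdge_b_iff.2 ⟨hi, Or.inl rfl⟩)

theorem le_leave (h : IsOptimalAt n π (BV.b i)) (hi : 1 ≤ i ∧ i ≤ n) :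
    BVal n π (aN n (i + 1)) ≤ BVal n π (BV.b i) := by
  simpa only [rB_leave, zero_add] using h.le (bEdge_b_iff.2 ⟨hi, Or.inr rfl⟩)

theorem enter_leave_le (ha : IsOptimalAt n π (BV.a i)) (hb : IsOptimalAt n π (BV.b i))
    (hi : 1 ≤ i ∧ i ≤ n) : 2 ^ i + BVal n π (aN n (i + 1)) ≤ BVal n π (BV.a i) := by
  linarith [ha.le_enter hi, hb.le_leave hi]

theorem not_skip (ha : IsOptimalAt n π (BV.a i)) (hb : IsOptimalAt n π (BV.b i))
    (hπ : IsUnichainPolicy n π) (hi : 1 ≤ i ∧ i ≤ n) : π (BV.a i) ≠ aN n (i + 1) := fun h => by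
  linarith [ha.enter_leave_le hb hi, hπ.bVal_skip hi h, two_le_two_pow hi.1]

theorem not_stay (hb : IsOptimalAt n π (BV.b i)) (ha : IsOptimalAt n π (BV.a (i + 1)))
    (hπ : IsUnichainPolicy n π) (hi : 1 ≤ i) (hin : i + 1 ≤ n) : π (BV.b i) ≠ BV.b (i + 1) :=
  fun h => by
    have hstay := hπ.bVal_stay ⟨hi, by omega⟩ (h.trans (bN_of_le hin).symm)
    have hleave := hb.le_leave ⟨hi, by omega⟩
    rw [bN_of_le hin] at hstay
    rw [aN_of_le hin] at hleave
    linarith [ha.le_enter ⟨by omega, hin⟩, two_le_two_pow (by omega : 1 ≤ i + 1)]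

end IsOptimalAt

/-- If levels `1, …, i - 1` are optimal, travelling to `a 1` and then entering and leaving each of
them collects `2 + 4 + ⋯ + 2 ^ (i - 1)`. -/
theorem two_pow_sub_two_add_bVal_le (ht : IsOptimalAt n π BV.t) (hi : 1 ≤ i) (hin : i ≤ n)
    (h : ∀ j, j < i → IsOptimalAt n π (BV.a j) ∧ IsOptimalAt n π (BV.b j)) :
    2 ^ i - 2 + BVal n π (BV.a i) ≤ BVal n π BV.t := by
  induction i, hi using Nat.le_induction with
  | base => linarith [ht.le_travel ⟨le_rfl, hin⟩]
  | succ i hi ih =>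
    have hlow := ih (by omega) fun j hj => h j (by omega)
    have hlevel := (h i (by omega)).1.enter_leave_le (h i (by omega)).2 ⟨hi, by omega⟩
    rw [aN_of_le hin] at hlevel
    linarith [pow_succ (2 : ℚ) i]

namespace IsTame

theorem bVal_aN_le_bVal_t (hπ : IsTame n π) (ht : IsOptimalAt n π BV.t) (hi : i ≤ n) :
    BVal n π (aN n (i + 1)) ≤ BVal n π BV.t := by
  rcases hi.eq_or_lt with rfl | hlt
  · rw [aN_succ_self, bVal_s]
    exact hπ.nonneg _ trivial
  · rw [aN_of_le hlt]
    exact ht.le_travel ⟨by omega, hlt⟩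

theorem bVal_aN_le_or (hπ : IsTame n π) (ht : IsOptimalAt n π BV.t) (hi : 1 ≤ i ∧ i ≤ n) :
    BVal n π (aN n (i + 1)) ≤ BVal n π (bN n (i + 1)) + 3 / 4 ∨
      BVal n π (bN n (i + 1)) + 2 ^ (i + 1) < BVal n π BV.t + 1 / 2 := by
  have hle := hπ.bVal_aN_le_bVal_t ht hi.2
  rcases hi.2.eq_or_lt with rfl | hlt
  · left; rw [aN_succ_self, bN_succ_self, bVal_s, hπ.bVal_d]; norm_num
  have hi' : 1 ≤ i + 1 ∧ i + 1 ≤ n := ⟨by omega, hlt⟩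
  rw [aN_of_le hlt] at hle ⊢
  rw [bN_of_le hlt]
  rcases hπ.cases_a hi' with ha | ha | ha
  · right; linarith [hπ.bVal_enter hi' ha]
  · rcases hπ.cases_b hi' with hb | hb
    · right
      have := two_le_two_pow hi.1
      rcases hπ.skip_stay _ hi' ha hb with h | h <;>
        linarith [pow_succ (2 : ℚ) i, pow_succ (2 : ℚ) (i + 1)]
    · left; linarith [hπ.bVal_skip hi' ha, hπ.bVal_leave hi' hb]
  · by_cases h : BVal n π (BV.b (i + 1)) + 2 ^ (i + 1) < BVal n π BV.t + 1 / 2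
    · exact Or.inr h
    · left; linarith [hπ.bVal_board hi' ha]

theorem bVal_bN_eq_or (hπ : IsTame n π) (hi : i ≤ n) (hboard : π (aN n (i + 1)) ≠ BV.t)
    (hle : BVal n π BV.t - 2 ^ (i + 1) + 5 / 4 ≤ BVal n π (aN n (i + 1))) :
    BVal n π (bN n (i + 1)) = BVal n π (aN n (i + 1)) ∨
      2 ^ (i + 1) + BVal n π (bN n (i + 1)) ≤ BVal n π (aN n (i + 1)) + 1 / 4 := by
  rcases hi.eq_or_lt with rfl | hlt
  · left; rw [aN_succ_self, bN_succ_self, bVal_s, hπ.bVal_d]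
  have hi' : 1 ≤ i + 1 ∧ i + 1 ≤ n := ⟨by omega, hlt⟩
  rw [aN_of_le hlt] at hle hboard ⊢
  rw [bN_of_le hlt]
  rcases hπ.cases_a hi' with ha | ha | ha
  · right; linarith [hπ.bVal_enter hi' ha]
  · rcases hπ.cases_b hi' with hb | hb
    · right
      rcases hπ.skip_stay _ hi' ha hb with h | h <;> linarith [pow_succ (2 : ℚ) (i + 1)]
    · left; linarith [hπ.bVal_skip hi' ha, hπ.bVal_leave hi' hb]
  · exact absurd ha hboard

theorem bVal_lt_board_of_enter_stay (hπ : IsTame n π) (ht : IsOptimalAt n π BV.t)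
    (hi : 1 ≤ i ∧ i ≤ n) (ha : π (BV.a i) = BV.b i) (hb : π (BV.b i) = bN n (i + 1))
    (hlt : BVal n π (BV.b i) < BVal n π (aN n (i + 1))) :
    BVal n π (BV.a i) < BVal n π BV.t - 2 ^ i + 5 / 4 := by
  have hstay := hπ.bVal_stay hi hb
  rcases hπ.bVal_aN_le_or ht hi with h | h
  · linarith
  · linarith [hπ.bVal_enter hi ha, pow_succ (2 : ℚ) i]

end IsTame

end Levels

/-! ## A leading switch raises the maximum value by at most `2` -/

section BoundedIncrease

variable {n i : ℕ} {π : BV → BV} {u v w : BV} {M : ℚ}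

namespace IsLeadingSwitch

theorem zB_le_of_enter (h : IsLeadingSwitch n π (BV.b i) w) (hπ : IsTame n π)
    (ha : π (BV.a i) = BV.b i) : zB n π (BV.b i) w ≤ 3 / 4 := by
  obtain ⟨hi, hw⟩ := bEdge_b_iff.1 h.improving.1
  have hpos := sub_pos.1 h.improving.2
  have hne := hπ.active_ne h.improving
  have hopt : IsOptimalAt n π (BV.a i) := h.optimal _ (by simp only [NV]; omega)
  have ht : IsOptimalAt n π BV.t := h.optimal _ (by simp only [NV]; omega)
  have henter := hπ.bVal_enter hi ha
  have hboard := hopt.le_board hi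
  rcases hw with rfl | rfl
  · have hb : π (BV.b i) = aN n (i + 1) := (hπ.cases_b hi).resolve_left hne
    have hleave := hπ.bVal_leave hi hb
    have hnot : π (aN n (i + 1)) ≠ BV.t := fun hboard => by
      rcases hπ.board i hi hboard with h | ⟨-, h⟩
      · exact absurd (ha.symm.trans h) (by simp)
      · exact hne h
    rw [zB, rB_stay]
    rcases hπ.bVal_bN_eq_or hi.2 hnot (by linarith [pow_succ (2 : ℚ) i]) with h | h
    · linarith
    · linarith [two_le_two_pow (by omega : 1 ≤ i + 1)]
  · have hb : π (BV.b i) = bN n (i + 1) := (hπ.cases_b hi).resolve_right hne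
    rw [rB_leave, zero_add] at hpos
    exact absurd hboard (hπ.bVal_lt_board_of_enter_stay ht hi ha hb hpos).not_ge

theorem zB_le_of_enter_leave (h : IsLeadingSwitch n π (BV.a (i + 1)) w) (hπ : IsTame n π)
    (hi : 1 ≤ i) (ha : π (BV.a i) = BV.b i) (hb : π (BV.b i) = BV.a (i + 1)) :
    zB n π (BV.a (i + 1)) w ≤ 1 / 4 := by
  obtain ⟨hi', hw⟩ := bEdge_a_iff.1 h.improving.1
  have hin : 1 ≤ i ∧ i ≤ n := ⟨hi, by omega⟩
  have hpos := sub_pos.1 h.improving.2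
  have hne := hπ.active_ne h.improving
  have ht : IsOptimalAt n π BV.t := h.optimal _ (by simp only [NV]; omega)
  have hopta : IsOptimalAt n π (BV.a i) := h.optimal _ (by simp only [NV]; omega)
  have hoptb : IsOptimalAt n π (BV.b i) := h.optimal _ (by simp only [NV]; omega)
  have henter := hπ.bVal_enter hin ha
  have hleave := hπ.bVal_leave hin (hb.trans (aN_of_le hi'.2).symm)
  rw [aN_of_le hi'.2] at hleave
  have hle : BVal n π BV.t - 2 ^ (i + 1) + 5 / 4 ≤ BVal n π (BV.a (i + 1)) := by
    linarith [hopta.le_board hin, pow_succ (2 : ℚ) i]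
  have hnot : π (BV.a (i + 1)) ≠ BV.t := fun hboard => by
    rcases hπ.board i hin (by rwa [aN_of_le hi'.2]) with h | ⟨-, h⟩
    · exact absurd (ha.symm.trans h) (by simp)
    · exact aN_ne_bN n (i + 1) (i + 1) (by rw [← h, hb, aN_of_le hi'.2])
  rcases hw with rfl | rfl | rfl
  · have hstay := hoptb.le_stay hin
    rw [zB, rB_enter]
    rcases hπ.bVal_bN_eq_or hin.2 (by rwa [aN_of_le hi'.2]) (by rwa [aN_of_le hi'.2]) with h | h <;>
      rw [aN_of_le hi'.2, bN_of_le hi'.2] at * <;> linarith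
  · exfalso
    rw [rB_skip, zero_add] at hpos
    have ha' : π (BV.a (i + 1)) = BV.b (i + 1) := by
      rcases hπ.cases_a hi' with h | h | h
      exacts [h, absurd h hne, absurd h hnot]
    have henter' := hπ.bVal_enter hi' ha'
    have hpow := two_le_two_pow hi'.1
    rcases hπ.cases_b hi' with hb' | hb'
    · exact hle.not_gt (hπ.bVal_lt_board_of_enter_stay ht hi' ha' hb' (by linarith))
    · linarith [hπ.bVal_leave hi' hb']
  · rw [rB_board] at hpos
    linarith

theorem offer_a_le (h : IsLeadingSwitch n π (BV.a i) w)
    (hM : ∀ u, IsBVertex n u → BVal n π u ≤ M) : rB n (BV.a i) w + BVal n π w ≤ M + 2 := by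
  obtain ⟨hi, hw⟩ := bEdge_a_iff.1 h.improving.1
  have hMw := hM w h.improving.1.isBVertex_right
  have hMt := hM BV.t trivial
  have hopt (j) (hj : j < i) : IsOptimalAt n π (BV.a j) ∧ IsOptimalAt n π (BV.b j) :=
    ⟨h.optimal _ (by simp only [NV]; omega), h.optimal _ (by simp only [NV]; omega)⟩
  have ht : IsOptimalAt n π BV.t := h.optimal _ (by simp only [NV]; omega)
  rcases hw with rfl | rfl | rfl
  · rw [rB_enter]
    rcases hi.1.eq_or_lt with rfl | hlt
    · linarith
    obtain ⟨j, hj, rfl⟩ : ∃ j, 1 ≤ j ∧ i = j + 1 := ⟨i - 1, by omega, by omega⟩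
    have hjn : 1 ≤ j ∧ j ≤ n := ⟨hj, by omega⟩
    have hlow := two_pow_sub_two_add_bVal_le ht hj hjn.2 fun k hk => hopt k (by omega)
    have hstay := (hopt j (by omega)).2.le_stay hjn
    rw [bN_of_le hi.2] at hstay
    linarith [(hopt j (by omega)).1.le_enter hjn, pow_succ (2 : ℚ) j]
  · rw [rB_skip]; linarith
  · rw [rB_board]; linarith [two_le_two_pow hi.1]

theorem offer_b_le (h : BEdge n (BV.b i) w) (hM : ∀ u, IsBVertex n u → BVal n π u ≤ M) :
    rB n (BV.b i) w + BVal n π w ≤ M + 2 := by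
  have hMw := hM w h.isBVertex_right
  rcases (bEdge_b_iff.1 h).2 with rfl | rfl
  · rw [rB_stay]; linarith
  · rw [rB_leave]; linarith

theorem bVal_update_t_le_max (h : IsLeadingSwitch n π BV.t w) (hπ : IsTame n π)
    (hu : IsBVertex n u) :
    BVal n (Function.update π BV.t w) u ≤ max (BVal n π u) (rB n BV.t w + BVal n π w) :=
  bVal_update_le_max hπ.toIsUnichainPolicy h.improving (S := ∅) (Or.inl rfl) id
    (fun _ _ h => h.elim) hu

theorem bVal_update_b_le_max (h : IsLeadingSwitch n π (BV.b i) w) (hπ : IsTame n π)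
    (ha : π (BV.a i) ≠ BV.b i) (hu : IsBVertex n u) :
    BVal n (Function.update π (BV.b i) w) u ≤
      max (BVal n π u) (rB n (BV.b i) w + BVal n π w) := by
  obtain ⟨hi, hw⟩ := bEdge_b_iff.1 h.improving.1
  refine bVal_update_le_max hπ.toIsUnichainPolicy h.improving (S := {BV.b i}) (Or.inr rfl)
    ?_ (fun u hu hπu => ?_) hu
  · rintro (rfl : w = BV.b i)
    exact (h.improving.1.NV_lt (by simp) (by simp)).ne rfl
  · have hπu : π u = BV.b i := hπu
    rcases (hπu ▸ hπ.isBPolicy u hu).eq_of_to_b with rfl | ⟨j, hj, rfl, rfl⟩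
    · exact absurd hπu ha
    · refine absurd hπu (IsOptimalAt.not_stay ?_ ?_ hπ.toIsUnichainPolicy hj hi.2) <;>
        exact h.optimal _ (by simp only [NV]; omega)

theorem bVal_update_a_le_max (h : IsLeadingSwitch n π (BV.a i) w) (hπ : IsTame n π)
    (hchain : ∀ j, j + 1 = i → 1 ≤ j → π (BV.a j) = BV.b j → π (BV.b j) ≠ BV.a i)
    (hu : IsBVertex n u) :
    BVal n (Function.update π (BV.a i) w) u ≤
      max (BVal n π u) (rB n (BV.a i) w + BVal n π w) := by
  obtain ⟨hi, hw⟩ := bEdge_a_iff.1 h.improving.1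
  have hpred {x} (hx : IsBVertex n x) (hxt : x ≠ BV.t) (hπx : π x = BV.a i) :
      ∃ j, 1 ≤ j ∧ j + 1 = i ∧ x = BV.b j := by
    rcases (hπx ▸ hπ.isBPolicy x hx).eq_of_to_a with rfl | ⟨j, hj, rfl, rfl | rfl⟩
    · exact absurd rfl hxt
    · refine absurd (hπx.trans (aN_of_le hi.2).symm)
        (IsOptimalAt.not_skip ?_ ?_ hπ.toIsUnichainPolicy ⟨hj, by omega⟩) <;>
        exact h.optimal _ (by simp only [NV]; omega)
    · exact ⟨j, hj, rfl, rfl⟩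
  refine bVal_update_le_max hπ.toIsUnichainPolicy h.improving
    (S := {x | x = BV.a i ∨ x ≠ BV.t ∧ π x = BV.a i}) (Or.inr (Or.inl rfl)) ?_ ?_ hu
  · rintro (rfl | ⟨hwt, hπw⟩)
    · exact (h.improving.1.NV_lt (by simp) (by simp)).ne rfl
    · obtain ⟨j, -, rfl, rfl⟩ := hpred h.improving.1.isBVertex_right hwt hπw
      have := h.improving.1.NV_lt (by simp) (by simp)
      simp only [NV] at this
      omega
  · rintro x hx (hπx | ⟨hπxt, hππx⟩)
    · refine or_iff_not_imp_left.2 fun hxt => ⟨Or.inr ⟨hxt, hπx⟩, ?_⟩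
      rw [hπx, rB_to_a]
    · obtain ⟨j, hj, rfl, hπx⟩ := hpred (hπ.isBPolicy x hx).isBVertex_right hπxt hππx
      rcases (hπx ▸ hπ.isBPolicy x hx).eq_of_to_b with rfl | ⟨k, hk, rfl, rfl⟩
      · exact absurd (hπx ▸ hππx) (hchain j rfl hj hπx)
      · refine absurd hπx (IsOptimalAt.not_stay ?_ ?_ hπ.toIsUnichainPolicy hk (by omega)) <;>
          exact h.optimal _ (by simp only [NV]; omega)

theorem bVal_update_le (h : IsLeadingSwitch n π v w) (hπ : IsTame n π)
    (hM : ∀ u, IsBVertex n u → BVal n π u ≤ M) (hu : IsBVertex n u) :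
    BVal n (Function.update π v w) u ≤ M + 2 := by
  have hMu : BVal n π u ≤ M + 2 := by linarith [hM u hu]
  have hadd := bVal_update_le_add hπ.toIsUnichainPolicy h.improving hu
  cases v with
  | t =>
    obtain ⟨i, hi, hin, rfl⟩ := bEdge_t_iff.1 h.improving.1
    refine (h.bVal_update_t_le_max hπ hu).trans (max_le hMu ?_)
    rw [rB_travel]
    linarith [hM (BV.a i) ⟨hi, hin⟩]
  | s => exact absurd rfl (h.improving.ne_s hπ.toIsUnichainPolicy)
  | d => exact absurd rfl (h.improving.ne_d hπ.toIsUnichainPolicy)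
  | a i =>
    by_cases hchain : ∃ j, j + 1 = i ∧ 1 ≤ j ∧ π (BV.a j) = BV.b j ∧ π (BV.b j) = BV.a i
    · obtain ⟨j, rfl, hj, ha, hb⟩ := hchain
      linarith [hM u hu, h.zB_le_of_enter_leave hπ hj ha hb]
    · push Not at hchain
      exact (h.bVal_update_a_le_max hπ hchain hu).trans (max_le hMu (h.offer_a_le hM))
  | b i =>
    by_cases ha : π (BV.a i) = BV.b i
    · linarith [hM u hu, h.zB_le_of_enter hπ ha]
    · exact (h.bVal_update_b_le_max hπ ha hu).trans (max_le hMu (offer_b_le h.improving.1 hM))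

end IsLeadingSwitch

end BoundedIncrease

/-! ## Leading switches preserve tameness -/

section Preservation

variable {n i : ℕ} {π : BV → BV} {v w : BV}

namespace IsLeadingSwitch

theorem skip_stay_update_of_NV_lt (h : IsLeadingSwitch n π v w) (hπ : IsTame n π)
    (hi : 1 ≤ i ∧ i ≤ n) (hlt : NV n v < NV n (BV.b i))
    (ha : Function.update π v w (BV.a i) = aN n (i + 1)) (hb : π (BV.b i) = bN n (i + 1)) :
    BVal n (Function.update π v w) (BV.b i) ≤ BVal n (Function.update π v w) (BV.a i) - 2 ^ i ∨
      BVal n (Function.update π v w) (BV.b i) ≤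
        BVal n (Function.update π v w) BV.t - 2 ^ (i + 1) + 3 / 2 := by
  have hU := hπ.toIsUnichainPolicy
  have hold : BVal n π (BV.b i) ≤ BVal n (Function.update π v w) (BV.a i) - 2 ^ i ∨
      BVal n π (BV.b i) ≤ BVal n (Function.update π v w) BV.t - 2 ^ (i + 1) + 3 / 2 := by
    rcases eq_or_ne v (BV.a i) with rfl | hva
    · rw [Function.update_self] at ha
      subst ha
      have hbest := h.best (BV.b i) (bEdge_a_iff.2 ⟨hi, Or.inl rfl⟩)
      have hnew := le_bVal_update_self hU h.improving
      rw [zB, zB, rB_enter] at hbest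
      left; linarith
    · rw [Function.update_of_ne hva.symm] at ha
      refine (hπ.skip_stay i hi ha hb).imp (fun h' => ?_) (fun h' => ?_)
      · linarith [bVal_le_bVal_update hU h.improving (u := BV.a i) hi]
      · linarith [bVal_le_bVal_update hU h.improving (u := BV.t) trivial]
  have hbound := bVal_update_le_of_NV_lt hU h.improving (u := BV.b i) hi hlt
  rw [pot_t, pot_b] at hbound
  rcases le_max_iff.1 hbound with hle | hle
  · exact hold.imp hle.trans hle.trans
  · right; linarith

theorem skip_stay_update (h : IsLeadingSwitch n π v w) (hπ : IsTame n π) (hi : 1 ≤ i ∧ i ≤ n)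
    (ha : Function.update π v w (BV.a i) = aN n (i + 1))
    (hb : Function.update π v w (BV.b i) = bN n (i + 1)) :
    BVal n (Function.update π v w) (BV.b i) ≤ BVal n (Function.update π v w) (BV.a i) - 2 ^ i ∨
      BVal n (Function.update π v w) (BV.b i) ≤
        BVal n (Function.update π v w) BV.t - 2 ^ (i + 1) + 3 / 2 := by
  have hU := hπ.toIsUnichainPolicy
  rcases eq_or_ne v (BV.b i) with rfl | hvb
  · exfalso
    rw [Function.update_of_ne (by simp)] at ha
    rw [Function.update_self] at hb
    have hopt : IsOptimalAt n π (BV.a i) := h.optimal _ (by simp only [NV]; omega)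
    have hb' := (hU.cases_b hi).resolve_left (hb ▸ hU.active_ne h.improving)
    linarith [hopt.le_enter hi, hU.bVal_skip hi ha, hU.bVal_leave hi hb', two_le_two_pow hi.1]
  rw [Function.update_of_ne hvb.symm] at hb
  have hNV : NV n v ≠ NV n (BV.b i) := mt (NV_injOn h.improving.1.isBVertex_left hi) hvb
  rcases hNV.lt_or_gt with hlt | hgt
  · exact h.skip_stay_update_of_NV_lt hπ hi hlt ha hb
  · exfalso
    have hgta : NV n (BV.a i) < NV n v := lt_trans (by simp only [NV]; omega) hgt
    rw [Function.update_of_ne (ne_of_apply_ne (NV n) hgta.ne)] at ha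
    exact IsOptimalAt.not_skip (h.optimal _ hgta) (h.optimal _ hgt) hU hi ha

theorem board_or_enter_stay_of_board_succ (h : IsLeadingSwitch n π (BV.a (i + 1)) BV.t)
    (hπ : IsTame n π) (hi : 1 ≤ i) :
    π (BV.a i) = BV.t ∨ π (BV.a i) = BV.b i ∧ π (BV.b i) = bN n (i + 1) := by
  have hU := hπ.toIsUnichainPolicy
  have hin : i + 1 ≤ n := h.improving.1.isBVertex_left.2
  have hi' : 1 ≤ i ∧ i ≤ n := ⟨hi, by omega⟩
  have hopta : IsOptimalAt n π (BV.a i) := h.optimal _ (by simp only [NV]; omega)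
  have hoptb : IsOptimalAt n π (BV.b i) := h.optimal _ (by simp only [NV]; omega)
  have hpos := sub_pos.1 h.improving.2
  rw [rB_board] at hpos
  rcases hU.cases_a hi' with ha | ha | ha
  · refine Or.inr ⟨ha, (hU.cases_b hi').resolve_right fun hb => ?_⟩
    have hleave := hU.bVal_leave hi' hb
    rw [aN_of_le hin] at hleave
    linarith [hopta.le_board hi', hU.bVal_enter hi' ha, pow_succ (2 : ℚ) i]
  · exact absurd ha (hopta.not_skip hoptb hU hi')
  · exact Or.inl ha

theorem board_or_enter_stay_of_a (h : IsLeadingSwitch n π (BV.a i) w) (hπ : IsTame n π)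
    (hboard : π (aN n (i + 1)) = BV.t)
    (hval : BVal n π (aN n (i + 1)) = BVal n π BV.t - 2 ^ (i + 1) + 5 / 4) :
    w = BV.t ∨ w = BV.b i ∧ π (BV.b i) = bN n (i + 1) := by
  have hU := hπ.toIsUnichainPolicy
  obtain ⟨hi, hw⟩ := bEdge_a_iff.1 h.improving.1
  have hne := hU.active_ne h.improving
  have hbest := h.best BV.t (bEdge_a_iff.2 ⟨hi, Or.inr (Or.inr rfl)⟩)
  rw [zB, zB, rB_board] at hbest
  rcases hw with rfl | rfl | rfl
  · refine Or.inr ⟨rfl, ?_⟩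
    rcases hπ.board i hi hboard with ha | ⟨ha, -⟩
    · refine (hU.cases_b hi).resolve_right fun hb => ?_
      have hpos := sub_pos.1 h.improving.2
      rw [rB_enter] at hpos
      linarith [hU.bVal_board hi ha, hU.bVal_leave hi hb, pow_succ (2 : ℚ) i]
    · exact absurd ha hne
  · rw [rB_skip] at hbest
    linarith [two_le_two_pow hi.1, pow_succ (2 : ℚ) i]
  · exact Or.inl rfl

theorem board_of_b (h : IsLeadingSwitch n π (BV.b i) w) (hπ : IsTame n π)
    (hboard : π (aN n (i + 1)) = BV.t)
    (hval : BVal n π (aN n (i + 1)) = BVal n π BV.t - 2 ^ (i + 1) + 5 / 4) :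
    π (BV.a i) = BV.t := by
  have hU := hπ.toIsUnichainPolicy
  obtain ⟨hi, hw⟩ := bEdge_b_iff.1 h.improving.1
  refine (hπ.board i hi hboard).resolve_right fun ⟨ha, hb⟩ => ?_
  rcases hw with rfl | rfl
  · exact hU.active_ne h.improving hb
  · have hopt : IsOptimalAt n π (BV.a i) := h.optimal _ (by simp only [NV]; omega)
    have hpos := sub_pos.1 h.improving.2
    rw [rB_leave] at hpos
    linarith [hopt.le_board hi, hU.bVal_enter hi ha, pow_succ (2 : ℚ) i]

theorem board_update (h : IsLeadingSwitch n π v w) (hπ : IsTame n π) (hi : 1 ≤ i ∧ i ≤ n)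
    (hboard : Function.update π v w (aN n (i + 1)) = BV.t) :
    Function.update π v w (BV.a i) = BV.t ∨
      Function.update π v w (BV.a i) = BV.b i ∧
        Function.update π v w (BV.b i) = bN n (i + 1) := by
  have hU := hπ.toIsUnichainPolicy
  have hlt : i + 1 ≤ n := by
    by_contra hlt
    obtain rfl : i = n := by omega
    rw [aN_succ_self, Function.update_of_ne (h.improving.ne_s hU).symm,
      bEdge_s_iff.1 (hU.isBPolicy BV.s trivial)] at hboard
    exact absurd hboard (by simp)
  have ha := aN_of_le hlt
  rcases eq_or_ne v (BV.a (i + 1)) with rfl | hv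
  · rw [ha, Function.update_self] at hboard
    subst hboard
    rw [Function.update_of_ne (by simp), Function.update_of_ne (by simp)]
    exact h.board_or_enter_stay_of_board_succ hπ hi.1
  rw [ha, Function.update_of_ne hv.symm, ← ha] at hboard
  have hval : BVal n π (aN n (i + 1)) = BVal n π BV.t - 2 ^ (i + 1) + 5 / 4 := by
    rw [ha] at hboard ⊢
    exact hU.bVal_board ⟨by omega, hlt⟩ hboard
  rcases eq_or_ne v (BV.a i) with rfl | hva
  · rw [Function.update_self, Function.update_of_ne (by simp)]
    exact h.board_or_enter_stay_of_a hπ hboard hval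
  rw [Function.update_of_ne hva.symm]
  rcases eq_or_ne v (BV.b i) with rfl | hvb
  · exact Or.inl (h.board_of_b hπ hboard hval)
  · rw [Function.update_of_ne hvb.symm]
    exact hπ.board i hi hboard

theorem isTame_update (h : IsLeadingSwitch n π v w) (hπ : IsTame n π) :
    IsTame n (Function.update π v w) where
  toIsUnichainPolicy := hπ.update h.improving
  nonneg u hu := (hπ.nonneg u hu).trans (bVal_le_bVal_update hπ.toIsUnichainPolicy h.improving hu)
  skip_stay _ hi := h.skip_stay_update hπ hi
  board _ hi := h.board_update hπ hi

end IsLeadingSwitch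

end Preservation

/-! ## Initial and optimal policies -/

section Endpoints

variable {n : ℕ} {π : BV → BV} {v : BV}

theorem isBPolicy_pi0 (hn : 1 ≤ n) : IsBPolicy n (pi0 n) := fun u hu => by
  cases u with
  | t => exact bEdge_t_iff.2 ⟨1, le_rfl, hn, rfl⟩
  | s => exact bEdge_s_iff.2 rfl
  | d => exact bEdge_d_iff.2 rfl
  | a i => exact bEdge_a_iff.2 ⟨hu, Or.inr (Or.inl rfl)⟩
  | b i => exact bEdge_b_iff.2 ⟨hu, Or.inr rfl⟩

theorem rB_pi0 (n : ℕ) (v : BV) : rB n v (pi0 n v) = 0 := by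
  cases v with
  | a i => exact rB_skip n i
  | b i => exact rB_leave n i
  | _ => simp [rB]

theorem isUnichainPolicy_pi0 (hn : 1 ≤ n) : IsUnichainPolicy n (pi0 n) :=
  ⟨isBPolicy_pi0 hn, bWeakUnichain_of_subsolution (W := 0) (isBPolicy_pi0 hn) fun v _ => by
    simp [rB_pi0]⟩

theorem bVal_pi0 (hn : 1 ≤ n) (hv : IsBVertex n v) : BVal n (pi0 n) v = 0 := by
  induction v, hv using (isUnichainPolicy_pi0 hn).induction with
  | sink => exact bVal_s n _
  | step u hu hs ih => rw [(isUnichainPolicy_pi0 hn).bVal_eq hu hs, ih, rB_pi0, add_zero]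

theorem isTame_pi0 (hn : 1 ≤ n) : IsTame n (pi0 n) where
  toIsUnichainPolicy := isUnichainPolicy_pi0 hn
  nonneg v hv := (bVal_pi0 hn hv).ge
  skip_stay i _ _ hb := absurd hb (aN_ne_bN n (i + 1) (i + 1))
  board i _ hb := by
    refine absurd hb ?_
    unfold aN
    split_ifs
    exacts [by simp [pi0], aN_ne_t n _]

theorem two_pow_sub_le_bVal_t (hπ : IsUnichainPolicy n π) (hn : 1 ≤ n)
    (hopt : ∀ v, IsOptimalAt n π v) : 2 ^ (n + 1) - 5 / 4 ≤ BVal n π BV.t := by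
  have hn' : 1 ≤ n ∧ n ≤ n := ⟨hn, le_rfl⟩
  have hstay := (hopt (BV.b n)).le_stay hn'
  rw [bN_succ_self, hπ.bVal_d] at hstay
  linarith [two_pow_sub_two_add_bVal_le (hopt BV.t) hn le_rfl fun j _ => ⟨hopt _, hopt _⟩,
    (hopt (BV.a n)).le_enter hn', pow_succ (2 : ℚ) n]

end Endpoints

/-! ## Simulation of `𝔅_n` by `𝔇_n` -/

/-- The policy `σ` for `𝔇_n` simulates the policy `π` for `𝔅_n`: the active gadget of every vertex
`v ≠ s` of `𝔅_n` is the open gadget of `(v, π v)`. In contrast to the twin policy of `π`, the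
gadgets of the other edges may be open (`σ (x v w) = y v w`) as well. -/
structure Simulates (n : ℕ) (σ : DV → DV) (π : BV → BV) : Prop where
  base : ∀ v, IsBVertex n v → v ≠ BV.s → σ (DV.base v) = DV.x v (π v)
  x_active : ∀ v, IsBVertex n v → v ≠ BV.s → σ (DV.x v (π v)) = DV.y v (π v)
  x_cases : ∀ v w, DEdgePair n v w → σ (DV.x v w) = DV.base v ∨ σ (DV.x v w) = DV.y v w
  z : ∀ v w, DEdgePair n v w → σ (DV.z v w) = DV.base w
  sink : σ (DV.base BV.s) = DV.base BV.s

/-- The value function of a policy `σ` for `𝔇_n` that simulates the policy `π` for `𝔅_n`, expressed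
through `π`; see `Simulates.dVal_eq`. -/
noncomputable def simVal (n : ℕ) (p : BV → ℚ) (σ : DV → DV) (π : BV → BV) : DV → ℚ
  | DV.base v => BVal n π v
  | DV.x v w => if σ (DV.x v w) = DV.y v w then BVal n π v + p v * zB n π v w else BVal n π v
  | DV.y v w => BVal n π v + p v * zB n π v w
  | DV.z v w => rB n v w + BVal n π w

section Simulation

variable {n : ℕ} {p : BV → ℚ} {σ : DV → DV} {π : BV → BV} {v w : BV} {u u' : DV}

theorem DEdge.isDVertex_right (h : DEdge n u u') : IsDVertex n u' := by
  rcases h with ⟨v, w, hvw, ⟨-, rfl⟩ | ⟨-, rfl⟩ | ⟨-, rfl⟩ | ⟨-, rfl⟩⟩ | ⟨-, rfl⟩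
  exacts [hvw, hvw.1.isBVertex_left, hvw, hvw.1.isBVertex_right, trivial]

theorem IsDAgent.isDVertex (h : IsDAgent n u) : IsDVertex n u := by
  cases u with
  | y => exact h.elim
  | _ => exact h

theorem IsDVal.indicator {V : DV → ℚ} (hσ : IsDPolicy n σ) (hV : IsDVal n p σ V) :
    IsDVal n p σ ({u | IsDVertex n u}.indicator V) := by
  have on {u} (hu : IsDVertex n u) : {u | IsDVertex n u}.indicator V u = V u :=
    Set.indicator_of_mem (s := {u | IsDVertex n u}) hu V
  refine ⟨?_, fun u hu => ?_, fun v w hvw => ?_⟩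
  · rw [on (u := DV.base BV.s) trivial, hV.1]
  · rw [on hu.isDVertex, on (hσ u hu).isDVertex_right, hV.2.1 u hu]
  · rw [on (u := DV.y v w) hvw, on (u := DV.z v w) hvw,
      on (u := DV.base v) hvw.1.isBVertex_left, hV.2.2 v w hvw]

theorem dVal_eq_of_unique {V : DV → ℚ} (hσ : IsDPolicy n σ) (hV : IsDVal n p σ V)
    (hunique : ∀ V', IsDVal n p σ V' → ∀ u, IsDVertex n u → V' u = V u) (hu : IsDVertex n u) :
    DVal n p σ u = V u := by
  have off {u} (hu : ¬ IsDVertex n u) : {u | IsDVertex n u}.indicator V u = 0 :=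
    Set.indicator_of_notMem (s := {u | IsDVertex n u}) hu V
  have hex : ∃! V : DV → ℚ, IsDVal n p σ V ∧ ∀ u, ¬ IsDVertex n u → V u = 0 := by
    refine ⟨_, ⟨hV.indicator hσ, fun u hu => off hu⟩, fun V' hV' => funext fun u => ?_⟩
    by_cases hu : IsDVertex n u
    · rw [hunique V' hV'.1 u hu, Set.indicator_of_mem (s := {u | IsDVertex n u}) hu]
    · rw [hV'.2 u hu, off hu]
  rw [DVal, dif_pos hex]
  exact hunique _ hex.exists.choose_spec.1 u hu

theorem simulates_twin (n : ℕ) (π : BV → BV) : Simulates n (twin π) π where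
  base _ _ hs := if_neg hs
  x_active _ _ _ := if_pos rfl
  x_cases _ _ _ := (ite_eq_or_eq _ _ _).symm
  z _ _ _ := rfl
  sink := rfl

namespace Simulates

theorem isDPolicy (h : Simulates n σ π) (hπ : IsBPolicy n π) : IsDPolicy n σ := fun u hu => by
  cases u with
  | base v =>
    by_cases hs : v = BV.s
    · subst hs
      exact Or.inr ⟨rfl, h.sink⟩
    · exact Or.inl ⟨v, π v, ⟨hπ v hu, hs⟩, Or.inl ⟨rfl, h.base v hu hs⟩⟩
  | x v w =>
    exact Or.inl ⟨v, w, hu, Or.inr ((h.x_cases v w hu).imp (⟨rfl, ·⟩) fun hy => Or.inl ⟨rfl, hy⟩)⟩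
  | y => exact hu.elim
  | z v w => exact Or.inl ⟨v, w, hu, Or.inr (Or.inr (Or.inr ⟨rfl, h.z v w hu⟩))⟩

theorem isDVal_simVal (h : Simulates n σ π) (hπ : IsUnichainPolicy n π) (p : BV → ℚ) :
    IsDVal n p σ (simVal n p σ π) := by
  refine ⟨bVal_s n π, fun u hu => ?_, fun v w _ => ?_⟩
  · cases u with
    | base v =>
      by_cases hs : v = BV.s
      · subst hs
        simp [h.sink, rD]
      · simp [h.base v hu hs, h.x_active v hu hs, simVal, rD, hπ.zB_active hu]
    | x v w => rcases h.x_cases v w hu with hx | hx <;> simp [hx, simVal, rD]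
    | y => exact hu.elim
    | z v w => simp [h.z v w hu, simVal, rD]
  · simp only [simVal, zB]
    ring

theorem apply_base_of_isDVal (h : Simulates n σ π) (hπ : IsUnichainPolicy n π) (hp : ∀ v, p v ≠ 0)
    {V : DV → ℚ} (hV : IsDVal n p σ V) (hv : IsBVertex n v) : V (DV.base v) = BVal n π v := by
  obtain ⟨hsink, hagent, hrand⟩ := hV
  induction v, hv using hπ.induction with
  | sink => rw [hsink, bVal_s]
  | step v hv hs ih =>
    have hvw : DEdgePair n v (π v) := ⟨hπ.isBPolicy v hv, hs⟩
    have hbase : V (DV.base v) = V (DV.x v (π v)) := by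
      simpa [h.base v hv hs, rD] using hagent (DV.base v) hv
    have hx : V (DV.x v (π v)) = V (DV.y v (π v)) := by
      simpa [h.x_active v hv hs, rD] using hagent (DV.x v (π v)) hvw
    have hz : V (DV.z v (π v)) = BVal n π v := by
      simpa [h.z v (π v) hvw, rD, ih, ← hπ.bVal_eq hv hs] using hagent (DV.z v (π v)) hvw
    have hy := hrand v (π v) hvw
    rw [← hx, ← hbase, hz] at hy
    exact mul_left_cancel₀ (hp v) (by linarith)

theorem dVal_eq (h : Simulates n σ π) (hπ : IsUnichainPolicy n π) (hp : ∀ v, p v ≠ 0)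
    (hu : IsDVertex n u) : DVal n p σ u = simVal n p σ π u := by
  refine dVal_eq_of_unique (h.isDPolicy hπ.isBPolicy) (h.isDVal_simVal hπ p)
    (fun V hV u hu => ?_) hu
  have base {v} (hv : IsBVertex n v) := h.apply_base_of_isDVal hπ hp hV hv
  have z {v w} (hvw : DEdgePair n v w) : V (DV.z v w) = rB n v w + BVal n π w := by
    simpa [h.z v w hvw, rD, base hvw.1.isBVertex_right] using hV.2.1 (DV.z v w) hvw
  have y {v w} (hvw : DEdgePair n v w) : V (DV.y v w) = BVal n π v + p v * zB n π v w := by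
    rw [hV.2.2 v w hvw, z hvw, base hvw.1.isBVertex_left, zB]
    ring
  cases u with
  | base v => exact base hu
  | x v w =>
    have hx := hV.2.1 (DV.x v w) hu
    rcases h.x_cases v w hu with hxw | hxw
    · simpa [hxw, rD, simVal, base hu.1.isBVertex_left] using hx
    · simpa [hxw, rD, simVal, y hu] using hx
  | y v w => exact y hu
  | z v w => exact z hu

theorem zD_base_x (h : Simulates n σ π) (hπ : IsUnichainPolicy n π) (hp : ∀ v, p v ≠ 0)
    (hvw : DEdgePair n v w) : zD n p σ (DV.base v) (DV.x v w) =
      if σ (DV.x v w) = DV.y v w then p v * zB n π v w else 0 := by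
  rw [zD, h.dVal_eq (u := DV.base v) hπ hp hvw.1.isBVertex_left,
    h.dVal_eq (u := DV.x v w) hπ hp hvw]
  simp only [simVal, rD]
  split_ifs <;> ring

theorem zD_x_y (h : Simulates n σ π) (hπ : IsUnichainPolicy n π) (hp : ∀ v, p v ≠ 0)
    (hvw : DEdgePair n v w) : zD n p σ (DV.x v w) (DV.y v w) =
      if σ (DV.x v w) = DV.y v w then 0 else p v * zB n π v w := by
  rw [zD, h.dVal_eq (u := DV.x v w) hπ hp hvw, h.dVal_eq (u := DV.y v w) hπ hp hvw]
  simp only [simVal, rD]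
  split_ifs <;> ring

theorem zD_x_base_active (h : Simulates n σ π) (hπ : IsUnichainPolicy n π) (hp : ∀ v, p v ≠ 0)
    (hv : IsBVertex n v) (hs : v ≠ BV.s) : zD n p σ (DV.x v (π v)) (DV.base v) = 0 := by
  rw [zD, h.dVal_eq (u := DV.x v (π v)) hπ hp ⟨hπ.isBPolicy v hv, hs⟩,
    h.dVal_eq (u := DV.base v) hπ hp hv]
  simp [simVal, rD, hπ.zB_active hv]

theorem zD_z_base (h : Simulates n σ π) (hπ : IsUnichainPolicy n π) (hp : ∀ v, p v ≠ 0)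
    (hvw : DEdgePair n v w) : zD n p σ (DV.z v w) (DV.base w) = 0 := by
  rw [zD, h.dVal_eq (u := DV.z v w) hπ hp hvw,
    h.dVal_eq (u := DV.base w) hπ hp hvw.1.isBVertex_right]
  simp [simVal, rD]

theorem exists_dImproving (h : Simulates n σ π) (hπ : IsUnichainPolicy n π) (hp : ∀ v, 0 < p v)
    (hvw : BImproving n π v w) :
    ∃ u u', DImproving n p σ u u' ∧ zD n p σ u u' = p v * zB n π v w := by
  have hp' v := (hp v).ne'
  have hpair : DEdgePair n v w := ⟨hvw.1, hvw.ne_s hπ⟩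
  have hpos := mul_pos (hp v) hvw.2
  rcases h.x_cases v w hpair with hx | hx
  · have hz : zD n p σ (DV.x v w) (DV.y v w) = p v * zB n π v w := by
      rw [h.zD_x_y hπ hp' hpair, hx, if_neg (by simp)]
    exact ⟨_, _, ⟨Or.inl ⟨v, w, hpair, by simp⟩, hz ▸ hpos⟩, hz⟩
  · have hz : zD n p σ (DV.base v) (DV.x v w) = p v * zB n π v w := by
      rw [h.zD_base_x hπ hp' hpair, if_pos hx]
    exact ⟨_, _, ⟨Or.inl ⟨v, w, hpair, by simp⟩, hz ▸ hpos⟩, hz⟩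

theorem isOptimalAt_of_not_dImproving (h : Simulates n σ π) (hπ : IsUnichainPolicy n π)
    (hp : ∀ v, 0 < p v) (hopt : ∀ u u', ¬ DImproving n p σ u u') (v : BV) :
    IsOptimalAt n π v := fun w hvw => by
  by_contra! hpos
  obtain ⟨u, u', hu, -⟩ := h.exists_dImproving hπ hp ⟨hvw, hpos⟩
  exact hopt u u' hu

theorem dImproving_cases (h : Simulates n σ π) (hπ : IsUnichainPolicy n π) (hp : ∀ v, 0 < p v)
    (hu : DImproving n p σ u u') :
    (∃ v w, BImproving n π v w ∧ u = DV.base v ∧ u' = DV.x v w ∧ σ (DV.x v w) = DV.y v w ∧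
      zD n p σ u u' = p v * zB n π v w) ∨
    (∃ v w, w ≠ π v ∧ u = DV.x v w ∧ u' = DV.base v) ∨
      ∃ v w, u = DV.x v w ∧ u' = DV.y v w := by
  have hp' v := (hp v).ne'
  obtain ⟨⟨v, w, hvw, hcase⟩ | ⟨rfl, rfl⟩, hpos⟩ := hu
  · rcases hcase with ⟨rfl, rfl⟩ | ⟨rfl, rfl⟩ | ⟨rfl, rfl⟩ | ⟨rfl, rfl⟩
    · have hz := h.zD_base_x hπ hp' hvw
      split_ifs at hz with hx
      · rw [hz] at hpos
        exact Or.inl ⟨v, w, ⟨hvw.1, pos_of_mul_pos_right hpos (hp v).le⟩, rfl, rfl, hx, hz⟩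
      · exact absurd hz hpos.ne'
    · refine Or.inr (Or.inl ⟨v, w, ?_, rfl, rfl⟩)
      rintro rfl
      exact hpos.ne' (h.zD_x_base_active hπ hp' hvw.1.isBVertex_left hvw.2)
    · exact Or.inr (Or.inr ⟨v, w, rfl, rfl⟩)
    · exact absurd (h.zD_z_base hπ hp' hvw) hpos.ne'
  · simp [zD, rD] at hpos

theorem update_base (h : Simulates n σ π) (hs : v ≠ BV.s) (hx : σ (DV.x v w) = DV.y v w) :
    Simulates n (Function.update σ (DV.base v) (DV.x v w)) (Function.update π v w) where
  base u hu hus := by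
    rcases eq_or_ne u v with rfl | huv
    · rw [Function.update_self, Function.update_self]
    · rw [Function.update_of_ne (by simpa using huv), Function.update_of_ne huv, h.base u hu hus]
  x_active u hu hus := by
    rw [Function.update_of_ne (by simp)]
    rcases eq_or_ne u v with rfl | huv
    · rw [Function.update_self, hx]
    · rw [Function.update_of_ne huv, h.x_active u hu hus]
  x_cases u u' huu' := by
    rw [Function.update_of_ne (by simp)]
    exact h.x_cases u u' huu'
  z u u' huu' := by
    rw [Function.update_of_ne (by simp)]
    exact h.z u u' huu'
  sink := by
    rw [Function.update_of_ne (by simpa using hs.symm), h.sink]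

theorem update_x_base (h : Simulates n σ π) (hw : w ≠ π v) :
    Simulates n (Function.update σ (DV.x v w) (DV.base v)) π where
  base u hu hus := by
    rw [Function.update_of_ne (by simp), h.base u hu hus]
  x_active u hu hus := by
    rw [Function.update_of_ne (by grind), h.x_active u hu hus]
  x_cases u u' huu' := by
    have := h.x_cases u u' huu'
    grind [Function.update_apply]
  z u u' huu' := by
    rw [Function.update_of_ne (by simp), h.z u u' huu']
  sink := by
    rw [Function.update_of_ne (by simp), h.sink]

theorem update_x_y (h : Simulates n σ π) :
    Simulates n (Function.update σ (DV.x v w) (DV.y v w)) π where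
  base u hu hus := by
    rw [Function.update_of_ne (by simp), h.base u hu hus]
  x_active u hu hus := by
    have := h.x_active u hu hus
    grind [Function.update_apply]
  x_cases u u' huu' := by
    have := h.x_cases u u' huu'
    grind [Function.update_apply]
  z u u' huu' := by
    rw [Function.update_of_ne (by simp), h.z u u' huu']
  sink := by
    rw [Function.update_of_ne (by simp), h.sink]

end Simulates

end Simulation

/-! ## Dantzig's rule on `𝔇_n` -/

section Dantzig

variable {n m : ℕ} {σ σ' : DV → DV} {π : BV → BV} {v v' w : BV}

theorem pSpec_pos (n : ℕ) (v : BV) : 0 < pSpec n v := by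
  unfold pSpec; positivity

theorem two_pow_mul_pSpec_le (h : NV n v' < NV n v) : 2 ^ (n + 5) * pSpec n v ≤ pSpec n v' := by
  have hle : (NV n v' + 1) * (n + 5) ≤ NV n v * (n + 5) := Nat.mul_le_mul_right _ h
  unfold pSpec
  rw [← zpow_natCast, ← zpow_add₀ two_ne_zero]
  refine zpow_le_zpow_right₀ one_le_two ?_
  rw [add_mul, one_mul] at hle
  zify at hle
  push_cast
  linarith

theorem BImproving.one_le_four_mul_zB (hπ : IsUnichainPolicy n π) (h : BImproving n π v w) :
    1 ≤ 4 * zB n π v w := by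
  obtain ⟨k, hk⟩ := hπ.four_mul_zB_eq_intCast h.1
  have hpos : (0 : ℚ) < k := hk ▸ mul_pos (by norm_num) h.2
  rw [hk]
  exact_mod_cast hpos

theorem IsTame.zB_lt (hπ : IsTame n π) (h : BEdge n v w) : zB n π v w < 2 ^ (n + 3) := by
  have hpot := le_pot h.isBVertex_left
  have hs : pot n BV.s = 2 ^ (n + 1) + 3 / 4 := rfl
  have hpow : (2 : ℚ) ^ (n + 3) = 4 * 2 ^ (n + 1) := by ring
  rw [zB]
  linarith [rB_le_pot_sub_pot h, hπ.bVal_add_pot_le h.isBVertex_right,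
    hπ.nonneg v h.isBVertex_left, two_le_two_pow (Nat.le_add_left 1 n)]

/-- Reduced costs in `𝔅_n` are multiples of `1 / 4` below `2 ^ (n + 3)`, so by the choice of the
probabilities an improving switch at an earlier vertex always wins. -/
theorem IsTame.pSpec_mul_zB_lt (hπ : IsTame n π) (h : BEdge n v w) {w' : BV}
    (h' : BImproving n π v' w') (hlt : NV n v' < NV n v) :
    pSpec n v * zB n π v w < pSpec n v' * zB n π v' w' := by
  have hge := h'.one_le_four_mul_zB hπ.toIsUnichainPolicy
  calc pSpec n v * zB n π v w < pSpec n v * 2 ^ (n + 3) :=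
        mul_lt_mul_of_pos_left (hπ.zB_lt h) (pSpec_pos n v)
    _ = 2 ^ (n + 5) * pSpec n v * (1 / 4) := by ring
    _ ≤ pSpec n v' * zB n π v' w' :=
        mul_le_mul (two_pow_mul_pSpec_le hlt) (by linarith) (by norm_num) (pSpec_pos n v').le

theorem isLeadingSwitch_of_pSpec_mul_zB_le (hπ : IsTame n π) (h : BImproving n π v w)
    (hmax : ∀ v' w', BImproving n π v' w' →
      pSpec n v' * zB n π v' w' ≤ pSpec n v * zB n π v w) : IsLeadingSwitch n π v w where
  improving := h
  optimal u hlt w' huw' := by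
    by_contra! hpos
    exact (hmax u w' ⟨huw', hpos⟩).not_gt (hπ.pSpec_mul_zB_lt h.1 ⟨huw', hpos⟩ hlt)
  best w' hvw' := by
    by_contra! hlt
    exact (hmax v w' ⟨hvw', h.2.trans hlt⟩).not_gt (mul_lt_mul_of_pos_left hlt (pSpec_pos n v))

theorem Simulates.dantzigStep (h : Simulates n σ π) (hπ : IsTame n π)
    (hstep : DantzigStep n (pSpec n) σ σ') :
    Simulates n σ' π ∨
      ∃ v w, IsLeadingSwitch n π v w ∧ Simulates n σ' (Function.update π v w) := by
  have hU := hπ.toIsUnichainPolicy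
  obtain ⟨u, u', hu, hmax, rfl⟩ := hstep
  rcases h.dImproving_cases hU (pSpec_pos n) hu with
    ⟨v, w, hvw, rfl, rfl, hx, hz⟩ | ⟨v, w, hw, rfl, rfl⟩ | ⟨v, w, rfl, rfl⟩
  · refine Or.inr ⟨v, w, isLeadingSwitch_of_pSpec_mul_zB_le hπ hvw fun v' w' hvw' => ?_,
      h.update_base (hvw.ne_s hU) hx⟩
    obtain ⟨a, b, hab, hz'⟩ := h.exists_dImproving hU (pSpec_pos n) hvw'
    exact hz ▸ hz' ▸ hmax a b hab
  · exact Or.inl (h.update_x_base hw)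
  · exact Or.inl h.update_x_y

theorem exists_simulates_bVal_le (hn : 1 ≤ n) {f : ℕ → DV → DV} (h0 : f 0 = twin (pi0 n))
    (hstep : ∀ k < m, DantzigStep n (pSpec n) (f k) (f (k + 1))) {k : ℕ} (hk : k ≤ m) :
    ∃ π, Simulates n (f k) π ∧ IsTame n π ∧ ∀ v, IsBVertex n v → BVal n π v ≤ 2 * k := by
  induction k with
  | zero =>
    exact ⟨pi0 n, h0 ▸ simulates_twin n _, isTame_pi0 hn, fun v hv => by simp [bVal_pi0 hn hv]⟩
  | succ k ih =>
    obtain ⟨π, hsim, hπ, hle⟩ := ih (by omega)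
    push_cast
    rcases hsim.dantzigStep hπ (hstep k hk) with hsim' | ⟨v, w, hvw, hsim'⟩
    · exact ⟨π, hsim', hπ, fun v hv => by linarith [hle v hv]⟩
    · exact ⟨_, hsim', hvw.isTame_update hπ, fun u hu => by
        linarith [hvw.bVal_update_le hπ hle hu]⟩

end Dantzig

/-- With probabilities `p_v = 2^{-𝒩_V(v)(n+5)}`, Dantzig's policy iteration on `𝔇_n`
started at the twin policy of `π_0` performs at least `2^n - 1` improving switches
before terminating. -/
theorem stmt18 (n : ℕ) (hn : 1 ≤ n)
    (f : ℕ → (DV → DV)) (m : ℕ)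
    (h0 : f 0 = twin (pi0 n))
    (hstep : ∀ k < m, DantzigStep n (pSpec n) (f k) (f (k + 1)))
    (hterm : ∀ u u', ¬ DImproving n (pSpec n) (f m) u u') :
    2 ^ n - 1 ≤ m := by
  obtain ⟨π, hsim, hπ, hle⟩ := exists_simulates_bVal_le hn h0 hstep le_rfl
  have hopt := hsim.isOptimalAt_of_not_dImproving hπ.toIsUnichainPolicy (pSpec_pos n) hterm
  have hval : (2 : ℚ) ^ (n + 1) - 5 / 4 ≤ 2 * m :=
    (two_pow_sub_le_bVal_t hπ.toIsUnichainPolicy hn hopt).trans (hle BV.t trivial)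
  have hlt : (2 : ℚ) ^ n < m + 1 := by linarith [pow_succ (2 : ℚ) n]
  have hlt' : 2 ^ n < m + 1 := by exact_mod_cast hlt
  omega
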